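/- Let X = A_3 be embedded in Y = B_7 = SO_{15} via the 15-dimensional irreducible representation of highest weight δ = ω_1 + ω_3. Let λ be a dominant weight for Y with λ ≠ 0, λ_1. Then V_Y(λ)↓X is multiplicity-free if and only if λ = λ_2, 2λ_1, 3λ_1, or λ_3. -/

import Mathlib

/-!
# Common framework

Over an algebraically closed field of characteristic zero, finite–dimensional rational
representations of a simple algebraic group are semisimple and are determined by their
formal characters, i.e. by elements of the group ring of the (rational) weight lattice;
the character of the irreducible module of highest weight `λ` is pinned down by the
Weyl character formula `A_ρ · χ_λ = A_{λ+ρ}`.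

Below we model, completely combinatorially:

* type `A_r` : weights are realised by their traceless representatives in `Fin (r+1) → ℚ`
  (the `gl`-coordinates), and the Weyl group is the symmetric group;
* types `B_n, C_n, D_n` : weights are realised in the standard `ε`-coordinates
  `Fin n → ℚ`, and the Weyl group consists of (signed) permutations, with evenly many
  sign changes in type `D`;
* an embedding `X = A_r < Y` (classical of type `t` and rank `n`) in which `X` acts on
  the natural module `W` of `Y` irreducibly with highest weight `δ` : the weights of `W`
  are `± w i` (plus one zero weight in type `B`), and restriction of characters is induced
  by the map `v ↦ ∑ i, v i • w i` of weight lattices;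
* `IsMFRes t n r δ lam` : the restriction to `X` of the irreducible `Y`-module with
  highest weight `lam` is multiplicity-free, i.e. its character is a sum of distinct
  irreducible characters of `X`.

Dominant weights are always recorded by their (natural number) coordinates in the basis
of fundamental weights, `e n k` being the `k`-th fundamental weight (1-indexed).
-/

noncomputable section

namespace MFPaper

/-- The Dynkin type of a classical group `B_n = SO_{2n+1}`, `C_n = Sp_{2n}`, `D_n = SO_{2n}`. -/
inductive CType | B | C | D
deriving DecidableEq

/-- The character ring: the integral group ring of a rational weight space
with `k` coordinates. -/
abbrev CharRing (k : ℕ) : Type := AddMonoidAlgebra ℤ (Fin k → ℚ)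

/-- The formal exponential `e^v` of a weight `v`. -/
def mono {k : ℕ} (v : Fin k → ℚ) : CharRing k := AddMonoidAlgebra.single v 1

/-- `e n k` : the `k`-th fundamental dominant weight (`1 ≤ k ≤ n`, 1-indexed) of a rank `n`
group, recorded by its coordinates in the basis of fundamental weights. -/
def e (n k : ℕ) : Fin n → ℕ := fun i => if (i : ℕ) + 1 = k then 1 else 0

/-! ### Type `A_r` -/

/-- The partition (`gl`) lift of the dominant weight of `A_r` with coordinates `d`
in the basis of fundamental weights. -/
def partLift (r : ℕ) (d : Fin r → ℕ) : Fin (r + 1) → ℚ := fun i =>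
  ∑ j ∈ Finset.univ.filter (fun j : Fin r => (i : ℕ) ≤ (j : ℕ)), (d j : ℚ)

/-- The traceless (`sl`) representative of the dominant weight of `A_r` with coordinates `d`. -/
def slWt (r : ℕ) (d : Fin r → ℕ) : Fin (r + 1) → ℚ := fun i =>
  partLift r d i - (∑ j : Fin r, (((j : ℕ) : ℚ) + 1) * (d j : ℚ)) / (r + 1)

/-- A lift of the half-sum of the positive roots of `A_r`. -/
def rhoA (r : ℕ) : Fin (r + 1) → ℚ := fun i => (r : ℚ) - (i : ℕ)

/-- The Weyl alternating sum `A_v = ∑_{σ} sgn(σ) e^{σ v}` for type `A_r`. -/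
def altA (r : ℕ) (v : Fin (r + 1) → ℚ) : CharRing (r + 1) :=
  ∑ σ : Equiv.Perm (Fin (r + 1)),
    ((Equiv.Perm.sign σ : ℤˣ) : ℤ) • mono (fun i => v (σ i))

/-- `IsCharA r d f` : `f` is the formal character of the irreducible `A_r`-module
of highest weight `d` (Weyl character formula). -/
def IsCharA (r : ℕ) (d : Fin r → ℕ) (f : CharRing (r + 1)) : Prop :=
  altA r (rhoA r) * f = altA r (slWt r d + rhoA r)

/-- `Decomp r F c` : the character `F` of a representation of `A_r` decomposes as
`∑_μ (c μ) · χ_μ`, i.e. the irreducible of highest weight `μ` occurs in it as a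
composition factor with multiplicity `c μ`. -/
def Decomp (r : ℕ) (F : CharRing (r + 1)) (c : (Fin r → ℕ) →₀ ℕ) : Prop :=
  F * altA r (rhoA r) = c.sum fun μ k => (k : ℤ) • altA r (slWt r μ + rhoA r)

/-- The Weyl dimension formula for type `A_r`. -/
def dimA (r : ℕ) (d : Fin r → ℕ) : ℚ :=
  ∏ p ∈ Finset.univ.filter (fun p : Fin (r + 1) × Fin (r + 1) => (p.1 : ℕ) < (p.2 : ℕ)),
    ((partLift r d p.1 - partLift r d p.2 + ((p.2 : ℕ) : ℚ) - ((p.1 : ℕ) : ℚ)) /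
      (((p.2 : ℕ) : ℚ) - ((p.1 : ℕ) : ℚ)))

/-- The self-dual irreducible `A_r`-module of highest weight `d` is *symplectic*
(it carries an invariant alternating form); by Steinberg's criterion this happens
exactly when `⟨d, 2ρ^∨⟩ = ∑ d_k · k(r+1-k)` is odd. -/
def IsSympWt (r : ℕ) (d : Fin r → ℕ) : Prop :=
  Odd (∑ i : Fin r, d i * ((i : ℕ) + 1) * (r - (i : ℕ)))

/-! ### The classical types `B`, `C`, `D` -/

/-- Convenient access to the `k`-th (0-indexed) coordinate. -/
def cval {n : ℕ} (c : Fin n → ℕ) (k : ℕ) : ℚ := if h : k < n then (c ⟨k, h⟩ : ℚ) else 0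

/-- `ε`-coordinates of the dominant weight of the classical group of type `t` and rank `n`
with coordinates `c` in the basis of fundamental weights (Bourbaki numbering). -/
def epsWt (t : CType) (n : ℕ) (c : Fin n → ℕ) : Fin n → ℚ := fun i =>
  (∑ k ∈ Finset.univ.filter (fun k : Fin n => (i : ℕ) ≤ (k : ℕ)), (c k : ℚ)) -
    (match t with
      | .C => 0
      | .B => cval c (n - 1) / 2
      | .D => (cval c (n - 2) + cval c (n - 1)) / 2)

/-- The half-sum of the positive roots in `ε`-coordinates. -/
def rhoY (t : CType) (n : ℕ) : Fin n → ℚ := fun i =>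
  match t with
  | .C => (n : ℚ) - (i : ℕ)
  | .B => (n : ℚ) - (i : ℕ) - 1 / 2
  | .D => (n : ℚ) - 1 - (i : ℕ)

/-- The Weyl alternating sum for the classical group of type `t` and rank `n`:
the Weyl group consists of the signed permutations of the coordinates,
with evenly many sign changes in type `D`. -/
def altY (t : CType) (n : ℕ) (v : Fin n → ℚ) : CharRing n :=
  ∑ σ : Equiv.Perm (Fin n), ∑ s : Fin n → Bool,
    if t = CType.D ∧ ¬ Even (Finset.univ.filter (fun i => s i = true)).card then 0
    else (((Equiv.Perm.sign σ : ℤˣ) : ℤ) *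
          (-1) ^ (Finset.univ.filter (fun i => s i = true)).card) •
      mono (fun i => (if s i then -1 else 1) * v (σ i))

/-- `IsCharY t n c f` : `f` is the formal character of the irreducible module of highest
weight `c` for the classical group of type `t` and rank `n` (Weyl character formula). -/
def IsCharY (t : CType) (n : ℕ) (c : Fin n → ℕ) (f : CharRing n) : Prop :=
  altY t n (rhoY t n) * f = altY t n (epsWt t n c + rhoY t n)

/-! ### The embedding `X = A_r < Y` via `δ`, and restriction of characters -/

/-- `WtSys t n r δ w` : `w` lists "half" of the weights of the natural module
`W = V_X(δ)` of the classical group `Y` of type `t` and rank `n`, for `X = A_r`: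
the weights of `W` (with multiplicity) are exactly the `± w i`, together with one
extra zero weight in type `B`.  Such a `w` records a maximal torus embedding
`T_X → T_Y` realising the irreducible embedding `X < Y = SO(W)` or `Sp(W)` given
by the representation of highest weight `δ`. -/
def WtSys (t : CType) (n r : ℕ) (δ : Fin r → ℕ)
    (w : Fin n → (Fin (r + 1) → ℚ)) : Prop :=
  ((∑ i : Fin n, (mono (w i) + mono (-(w i)))) +
      (if t = CType.B then mono (0 : Fin (r + 1) → ℚ) else 0)) * altA r (rhoA r)
    = altA r (slWt r δ + rhoA r)

/-- Restriction of characters from `Y` to `X = A_r` along the torus embedding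
recorded by `w`. -/
def resChar {n r : ℕ} (w : Fin n → (Fin (r + 1) → ℚ)) (F : CharRing n) :
    CharRing (r + 1) :=
  AddMonoidAlgebra.mapDomain (fun v : Fin n → ℚ => ∑ i : Fin n, v i • w i) F

/-- `IsMFRes t n r δ lam` : in the embedding `X = A_r < Y` (the classical group of type
`t` and rank `n`) given by the irreducible representation of highest weight `δ`, the
restriction to `X` of the irreducible `Y`-module of highest weight `lam` is
multiplicity-free: its character is a sum of *distinct* irreducible characters of `X`. -/
def IsMFRes (t : CType) (n r : ℕ) (δ : Fin r → ℕ) (lam : Fin n → ℕ) : Prop :=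
  ∀ w, WtSys t n r δ w → ∀ f, IsCharY t n lam f →
    ∃ c : (Fin r → ℕ) →₀ ℕ, Decomp r (resChar w f) c ∧ ∀ μ, c μ ≤ 1

/-- The operation `e^v ↦ e^{k·v}` on characters (Adams operation on the torus),
used to express symmetric and exterior powers of characters. -/
def pw {m : ℕ} (k : ℕ) (F : CharRing m) : CharRing m :=
  AddMonoidAlgebra.mapDomain (fun v : Fin m → ℚ => (k : ℚ) • v) F

/-- The irreducible `A_r`-module of highest weight `d` carries a nonzero invariant
*symmetric* bilinear form, i.e. the trivial module occurs in its symmetric square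
(whose character `S` satisfies `2S = f² + f^{[2]}`). -/
def HasSymForm (r : ℕ) (d : Fin r → ℕ) : Prop :=
  ∀ f, IsCharA r d f →
    ∃ c : (Fin r → ℕ) →₀ ℕ,
      (f * f + pw 2 f) * altA r (rhoA r)
          = c.sum (fun μ k => ((2 * k : ℕ) : ℤ) • altA r (slWt r μ + rhoA r)) ∧ 1 ≤ c 0

/-- The irreducible `A_r`-module of highest weight `d` carries a nonzero invariant
*alternating* bilinear form, i.e. the trivial module occurs in its exterior square
(whose character `Λ` satisfies `2Λ = f² - f^{[2]}`). -/
def HasAltForm (r : ℕ) (d : Fin r → ℕ) : Prop :=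
  ∀ f, IsCharA r d f →
    ∃ c : (Fin r → ℕ) →₀ ℕ,
      (f * f - pw 2 f) * altA r (rhoA r)
          = c.sum (fun μ k => ((2 * k : ℕ) : ℤ) • altA r (slWt r μ + rhoA r)) ∧ 1 ≤ c 0

end MFPaper

open MFPaper

namespace AdjointB7

open Finset

/-!
In the restriction of the Weyl character formula of `B_7`, numerator and denominator vanish, since
the weight `ε_7` restricts to `0`. Dividing both by the short-root factors and expanding by
Kostant's partition function leaves a finite sum for the multiplicity at the restriction of `λ`
minus `x`. At fixed depth `x` this sum depends on each coordinate of `λ` only up to a bound, so that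
finitely many evaluations produce a multiplicity of at least `2` for all `λ` but `k λ_1` with
`k ≤ 3`, `λ_2` and `λ_3`. For these, `V(λ_k)` is the `k`-th exterior power of the natural module
and `V(k λ_1)` is the `k`-th symmetric power minus the `(k-2)`-nd. Newton's identities express these
characters by power sums, and multiplication by a power sum acts on the alternants of `B_7` and of
`A_3` by translating exponents, which yields the decompositions.
-/

section CharacterRing

variable {k l : ℕ}

instance : IsDomain (CharRing k) := NoZeroDivisors.to_isDomain _

lemma mono_mul_mono (u v : Fin k → ℚ) : mono u * mono v = mono (u + v) := by
  simp [mono, AddMonoidAlgebra.single_mul_single]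

lemma mono_zero : mono (0 : Fin k → ℚ) = 1 := rfl

lemma prod_mono {ι : Type*} (s : Finset ι) (f : ι → Fin k → ℚ) :
    ∏ i ∈ s, mono (f i) = mono (∑ i ∈ s, f i) := by
  classical
  induction s using Finset.induction_on with
  | empty => simp [mono_zero]
  | insert a s h ih => rw [prod_insert h, sum_insert h, ih, mono_mul_mono]

lemma mono_pow (v : Fin k → ℚ) (m : ℕ) : mono v ^ m = mono (m • v) := by
  simpa using prod_mono (range m) fun _ => v

lemma coeff_mono (u p : Fin k → ℚ) : (mono u).coeff p = if u = p then 1 else 0 := by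
  classical
  simp [mono, AddMonoidAlgebra.coeff_single, Finsupp.single_apply]

lemma coeff_zsmul (z : ℤ) (F : CharRing k) (p : Fin k → ℚ) : (z • F).coeff p = z * F.coeff p := rfl

lemma coeff_sum {ι : Type*} (s : Finset ι) (F : ι → CharRing k) (p : Fin k → ℚ) :
    (∑ i ∈ s, F i).coeff p = ∑ i ∈ s, (F i).coeff p := by
  rw [AddMonoidAlgebra.coeff_sum, Finsupp.finsetSum_apply]

lemma coeff_mul_mono (F : CharRing k) (u p : Fin k → ℚ) :
    (F * mono u).coeff p = F.coeff (p - u) := by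
  simpa [mono] using AddMonoidAlgebra.coeff_mul_single_eq_coeff_mul (r := (1 : ℤ)) (p - u)
    fun _ _ => eq_sub_iff_add_eq.symm

lemma eq_sum_coeff_smul_mono (F : CharRing k) :
    F = ∑ u ∈ F.coeff.support, F.coeff u • mono u := by
  conv_lhs => rw [← F.sum_coeff_single]
  simp [Finsupp.sum, mono]

/-- The ring homomorphism `e^v ↦ e^{φ v}` of character rings induced by a homomorphism of
weights. -/
def mapWeights (φ : (Fin k → ℚ) →+ (Fin l → ℚ)) : CharRing k →+* CharRing l :=
  AddMonoidAlgebra.mapDomainRingHom ℤ φ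

lemma mapWeights_mono (φ : (Fin k → ℚ) →+ (Fin l → ℚ)) (v : Fin k → ℚ) :
    mapWeights φ (mono v) = mono (φ v) := by
  simp [mapWeights, mono, AddMonoidAlgebra.mapDomain_single]

/-- The exponential `e^{a ε_j}` of a multiple of the `j`-th coordinate weight. -/
def coordExp (j : Fin k) (a : ℚ) : CharRing k := mono (Pi.single j a)

lemma coordExp_mul (j : Fin k) (a b : ℚ) : coordExp j a * coordExp j b = coordExp j (a + b) := by
  simp [coordExp, mono_mul_mono, Pi.single_add]

lemma coordExp_zero (j : Fin k) : coordExp j 0 = 1 := by simp [coordExp, mono_zero]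

lemma coordExp_mul_coordExp_neg (j : Fin k) (a : ℚ) : coordExp j a * coordExp j (-a) = 1 := by
  rw [coordExp_mul, add_neg_cancel, coordExp_zero]

lemma coordExp_pow (j : Fin k) (a : ℚ) (m : ℕ) : coordExp j a ^ m = coordExp j (m * a) := by
  rw [coordExp, mono_pow, ← Pi.single_smul, nsmul_eq_mul, coordExp]

lemma prod_coordExp (a : Fin k → ℚ) : ∏ j, coordExp j (a j) = mono a := by
  simp only [coordExp, prod_mono, univ_sum_single]

/-- Restriction of characters along the torus embedding given by the weights `w`, as a ring
homomorphism; this is `resChar` when `k = r + 1`. -/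
def restrict (w : Fin l → Fin k → ℚ) : CharRing l →+* CharRing k :=
  mapWeights (Fintype.linearCombination ℚ w).toAddMonoidHom

lemma restrict_mono (w : Fin l → Fin k → ℚ) (v : Fin l → ℚ) :
    restrict w (mono v) = mono (∑ i, v i • w i) := mapWeights_mono _ _

lemma restrict_coordExp (w : Fin l → Fin k → ℚ) (j : Fin l) (a : ℚ) :
    restrict w (coordExp j a) = mono (a • w j) := by
  rw [coordExp, restrict_mono]
  simp [Pi.single_apply]

end CharacterRing

section Alternants

variable {n : ℕ}

lemma altA_eq_det (r : ℕ) (v : Fin (r + 1) → ℚ) :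
    altA r v = (Matrix.of fun i j => coordExp j (v i)).det := by
  simp only [Matrix.det_apply, Matrix.of_apply, altA, Units.smul_def]
  exact sum_congr rfl fun σ _ => by rw [prod_coordExp fun j => v (σ j)]

lemma prod_coordExp_sub (a : Fin n → ℚ) :
    ∏ j, (coordExp j (a j) - coordExp j (-a j)) =
      ∑ s : Fin n → Bool, ((-1 : ℤ) ^ #{i | s i = true}) •
        mono fun i => (if s i then -1 else 1) * a i := by
  have expand (j : Fin n) : coordExp j (a j) - coordExp j (-a j) = ∑ b : Bool,
      ((if b then (-1 : ℤ) else 1) • coordExp j ((if b then -1 else 1) * a j)) := by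
    simp [sub_eq_neg_add]
  simp_rw [expand, prod_univ_sum, Fintype.piFinset_univ]
  refine sum_congr rfl fun s _ => ?_
  have sign_eq : (-1 : ℤ) ^ #{i | s i = true} = ∏ i, if s i then (-1 : ℤ) else 1 := by
    rw [prod_ite]; simp
  rw [← prod_coordExp, sign_eq]
  simp only [zsmul_eq_mul, prod_mul_distrib]
  push_cast
  rfl

lemma altY_B_eq_det (v : Fin n → ℚ) :
    altY .B n v = (Matrix.of fun i j => coordExp j (v i) - coordExp j (-v i)).det := by
  rw [Matrix.det_apply, altY]
  refine sum_congr rfl fun σ _ => ?_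
  simp only [Matrix.of_apply]
  rw [prod_coordExp_sub fun i => v (σ i), smul_sum]
  refine sum_congr rfl fun s _ => ?_
  simp [Units.smul_def, mul_smul]

/-- The coefficient of `e^c` in `e^a - e^{-a}`. -/
def signedDelta {G : Type*} [Neg G] [DecidableEq G] (a c : G) : ℤ :=
  (if a = c then 1 else 0) - (if -a = c then 1 else 0)

lemma coeff_prod_coordExp_sub (a u : Fin n → ℚ) :
    (∏ j, (coordExp j (a j) - coordExp j (-a j))).coeff u = ∏ j, signedDelta (a j) (u j) := by
  have expand (j : Fin n) : signedDelta (a j) (u j) = ∑ b : Bool,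
      ((if b then (-1 : ℤ) else 1) * (if (if b then -1 else 1) * a j = u j then 1 else 0)) := by
    simp only [signedDelta, Fintype.sum_bool, if_true, one_mul, neg_mul,
      Bool.false_eq_true, if_false]
    ring
  simp_rw [prod_coordExp_sub, coeff_sum, coeff_zsmul, coeff_mono, expand, prod_univ_sum,
    Fintype.piFinset_univ]
  refine sum_congr rfl fun s _ => ?_
  rw [prod_mul_distrib, prod_ite_zero, prod_ite]
  simp [funext_iff]

/-- The `B_{n+1}`-alternant with exponents `m / 2`, divided by `e^{ε/2} - e^{-ε/2}` for the last
coordinate `ε` and then specialised at `ε = 0`. -/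
def specAlternant (m : Fin (n + 1) → ℕ) : CharRing n :=
  (Matrix.of fun i => (Fin.snoc (fun j => coordExp j (m i / 2 : ℚ) - coordExp j (-(m i / 2 : ℚ)))
    (m i : CharRing n) : Fin (n + 1) → CharRing n)).det

/-- The coefficient of `e^{c/2}` in `specAlternant m`, see `coeff_specAlternant`. -/
def specNumer (m : Fin (n + 1) → ℕ) (c : Fin n → ℤ) : ℤ :=
  (Matrix.of fun i =>
    (Fin.snoc (fun j => signedDelta (m i : ℤ) (c j)) (m i : ℤ) : Fin (n + 1) → ℤ)).det

lemma coeff_specAlternant_eq_sum (m : Fin (n + 1) → ℕ) (u : Fin n → ℚ) :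
    (specAlternant m).coeff u = ∑ σ : Equiv.Perm (Fin (n + 1)), (Equiv.Perm.sign σ : ℤ) *
      ((∏ j : Fin n, signedDelta (m (σ j.castSucc) / 2 : ℚ) (u j)) * m (σ (Fin.last n))) := by
  simp only [specAlternant, Matrix.det_apply, coeff_sum, Units.smul_def, coeff_zsmul]
  refine sum_congr rfl fun σ _ => ?_
  simp only [Matrix.of_apply, Fin.prod_univ_castSucc, Fin.snoc_castSucc, Fin.snoc_last]
  rw [mul_comm (∏ _, _), ← nsmul_eq_mul, ← natCast_zsmul, coeff_zsmul,
    coeff_prod_coordExp_sub fun j : Fin n => (m (σ j.castSucc) / 2 : ℚ), mul_comm (m _ : ℤ)]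

lemma signedDelta_div_two (a c : ℤ) : signedDelta (a / 2 : ℚ) (c / 2) = signedDelta a c := by
  simp only [signedDelta, ← neg_div, div_left_inj' (two_ne_zero' ℚ)]
  norm_cast

lemma coeff_specAlternant (m : Fin (n + 1) → ℕ) (c : Fin n → ℤ) :
    (specAlternant m).coeff (fun j => (c j / 2 : ℚ)) = specNumer m c := by
  rw [coeff_specAlternant_eq_sum, specNumer, Matrix.det_apply]
  refine sum_congr rfl fun σ _ => ?_
  simp only [Matrix.of_apply, Fin.prod_univ_castSucc, Fin.snoc_castSucc, Fin.snoc_last,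
    Units.smul_def, smul_eq_mul, ← signedDelta_div_two, Int.cast_natCast]

lemma signedDelta_ne_zero {G : Type*} [Neg G] [DecidableEq G] {a c : G}
    (h : signedDelta a c ≠ 0) : c = a ∨ c = -a := by
  by_contra! hc
  exact h (by simp [signedDelta, hc.1.symm, hc.2.symm])

lemma exists_perm_of_coeff_specAlternant_ne_zero {m : Fin (n + 1) → ℕ} {u : Fin n → ℚ}
    (h : (specAlternant m).coeff u ≠ 0) : ∃ σ : Equiv.Perm (Fin (n + 1)), ∀ j : Fin n,
      u j = (m (σ j.castSucc) / 2 : ℚ) ∨ u j = -(m (σ j.castSucc) / 2 : ℚ) := by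
  rw [coeff_specAlternant_eq_sum] at h
  obtain ⟨σ, -, hσ⟩ := exists_ne_zero_of_sum_ne_zero h
  have hprod := left_ne_zero_of_mul (right_ne_zero_of_mul hσ)
  exact ⟨σ, fun j => signedDelta_ne_zero (prod_ne_zero_iff.1 hprod j (mem_univ j))⟩

end Alternants

section Vandermonde

open Polynomial

variable {A : Type*} [CommRing A] {n : ℕ}

lemma det_eval_eq_det_coeff_mul (y : Fin n → A) {q : Fin n → A[X]}
    (hq : ∀ i, (q i).degree < n) :
    (Matrix.of fun i j => (q i).eval (y j)).det =
      (Matrix.of fun i k : Fin n => (q i).coeff k.rev).det *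
        ∏ i, ∏ j ∈ Ioi i, (y i - y j) := by
  have hV := Matrix.det_projVandermonde (fun _ => 1) y
  simp only [one_mul] at hV
  rw [← hV, ← Matrix.det_transpose (Matrix.projVandermonde _ _), ← Matrix.det_mul]
  congr 1
  ext i j
  simp only [Matrix.of_apply, Matrix.mul_apply, Matrix.transpose_apply,
    Matrix.projVandermonde_apply, one_pow, one_mul]
  rw [eval_eq_sum, ← Polynomial.sum_fin (fun k a => a * y j ^ k) (by simp) (hq i)]
  exact (Equiv.sum_comp Fin.revPerm fun k : Fin n => (q i).coeff k * y j ^ (k : ℕ)).symm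

lemma prod_sub_dvd_det_eval (y : Fin n → A) (q : Fin n → A[X]) :
    ∏ i, ∏ j ∈ Ioi i, (y i - y j) ∣ (Matrix.of fun i j => (q i).eval (y j)).det := by
  nontriviality A
  set p : A[X] := ∏ j, (X - C (y j)) with hp
  have p_monic : p.Monic := monic_prod_of_monic _ _ fun j _ => monic_X_sub_C _
  have p_degree : p.degree = n := by
    rw [degree_eq_natDegree p_monic.ne_zero, hp,
      natDegree_prod_of_monic _ _ fun j _ => monic_X_sub_C _]
    simp
  have eval_mod (i j : Fin n) : (q i).eval (y j) = (q i %ₘ p).eval (y j) := by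
    have root : p.eval (y j) = 0 := by
      rw [hp, eval_prod]
      exact prod_eq_zero (mem_univ j) (by simp)
    conv_lhs => rw [← modByMonic_add_div (q i) p]
    simp [root]
  simp_rw [eval_mod]
  rw [det_eval_eq_det_coeff_mul y fun i => p_degree ▸ degree_modByMonic_lt _ p_monic]
  exact dvd_mul_left _ _

lemma det_eval_of_monic (y : Fin n → A) {q : Fin n → A[X]}
    (hmonic : ∀ i, (q i).Monic) (hdeg : ∀ i, (q i).natDegree = i.rev) :
    (Matrix.of fun i j => (q i).eval (y j)).det = ∏ i, ∏ j ∈ Ioi i, (y i - y j) := by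
  nontriviality A
  have degree_lt (i : Fin n) : (q i).degree < n := by
    rw [degree_eq_natDegree (hmonic i).ne_zero, hdeg]
    exact_mod_cast i.rev.isLt
  rw [det_eval_eq_det_coeff_mul y degree_lt, Matrix.det_of_isUpperTriangular, prod_eq_one, one_mul]
  · intro i _
    rw [Matrix.of_apply, ← hdeg]
    exact (hmonic i).coeff_natDegree
  · intro i k hki
    exact coeff_eq_zero_of_natDegree_lt (by rw [hdeg]; exact_mod_cast Fin.rev_lt_rev.2 hki)

/-- The two-variable quantum integer `(z ^ m - w ^ m) / (z - w)`. -/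
def quantumInt (m : ℕ) (z w : A) : A := ∑ i ∈ range m, z ^ i * w ^ (m - 1 - i)

lemma quantumInt_mul_sub (m : ℕ) (z w : A) : quantumInt m z w * (z - w) = z ^ m - w ^ m :=
  (Commute.all z w).geom_sum₂_mul m

lemma quantumInt_one_one (m : ℕ) : quantumInt m (1 : A) 1 = m := by simp [quantumInt]

lemma map_quantumInt {B : Type*} [CommRing B] (φ : A →+* B) (m : ℕ) (z w : A) :
    φ (quantumInt m z w) = quantumInt m (φ z) (φ w) := by simp [quantumInt]

lemma quantumInt_add_two (m : ℕ) (z w : A) :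
    quantumInt (m + 2) z w = (z + w) * quantumInt (m + 1) z w - z * w * quantumInt m z w := by
  have step (m : ℕ) : quantumInt (m + 1) z w = z ^ m + w * quantumInt m z w :=
    geom_sum₂_succ_eq z w
  linear_combination step (m + 1) - z * step m

lemma quantumInt_add_four (m : ℕ) {z w : A} (h : z * w = 1) :
    quantumInt (m + 4) z w = (z ^ 2 + w ^ 2) * quantumInt (m + 2) z w - quantumInt m z w := by
  linear_combination quantumInt_add_two (m + 2) z w + (z + w) * quantumInt_add_two (m + 1) z w +
    z * w * quantumInt_add_two m z w - h * (1 + z * w) * quantumInt m z w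

lemma quantumInt_odd_eq_eval [Nontrivial A] (k : ℕ) : ∃ P : A[X], P.Monic ∧ P.natDegree = k ∧
    ∀ z w, z * w = 1 → quantumInt (2 * k + 1) z w = P.eval (z ^ 2 + w ^ 2) := by
  induction k using Nat.twoStepInduction with
  | zero => exact ⟨1, monic_one, natDegree_one, by simp [quantumInt]⟩
  | one =>
    refine ⟨X + C 1, monic_X_add_C 1, natDegree_X_add_C 1, fun z w h => ?_⟩
    simp only [quantumInt, sum_range_succ, eval_add, eval_X, eval_C]
    simp only [range_zero, sum_empty]
    linear_combination h
  | more k ih₀ ih₁ =>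
    obtain ⟨P₀, -, degree₀, eval₀⟩ := ih₀
    obtain ⟨P₁, monic₁, degree₁, eval₁⟩ := ih₁
    have degree_X_mul : (X * P₁).natDegree = k + 2 := by
      rw [monic_X.natDegree_mul monic₁, natDegree_X, degree₁]; ring
    have degree_lt : P₀.natDegree < (X * P₁).natDegree := by omega
    refine ⟨X * P₁ - P₀, (monic_X.mul monic₁).sub_of_left (degree_lt_degree degree_lt),
      by rw [natDegree_sub_eq_left_of_natDegree_lt degree_lt, degree_X_mul], fun z w h => ?_⟩
    rw [show 2 * (k + 2) + 1 = 2 * k + 1 + 4 by ring, quantumInt_add_four _ h, eval₀ z w h,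
      show 2 * k + 1 + 2 = 2 * (k + 1) + 1 by ring, eval₁ z w h]
    simp

lemma quantumInt_even_eq_eval (k : ℕ) : ∃ Q : A[X],
    ∀ z w, z * w = 1 → quantumInt (2 * k) z w = (z + w) * Q.eval (z ^ 2 + w ^ 2) := by
  induction k using Nat.twoStepInduction with
  | zero => exact ⟨0, by simp [quantumInt]⟩
  | one => exact ⟨1, by simp [quantumInt, sum_range_succ, add_comm]⟩
  | more k ih₀ ih₁ =>
    obtain ⟨Q₀, eval₀⟩ := ih₀
    obtain ⟨Q₁, eval₁⟩ := ih₁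
    refine ⟨X * Q₁ - Q₀, fun z w h => ?_⟩
    rw [show 2 * (k + 2) = 2 * k + 4 by ring, quantumInt_add_four _ h, eval₀ z w h,
      show 2 * k + 2 = 2 * (k + 1) by ring, eval₁ z w h]
    simp only [eval_sub, eval_mul, eval_X]
    ring

variable {z w : Fin n → A}

lemma det_quantumInt_odd (h : ∀ j, z j * w j = 1) :
    (Matrix.of fun i j : Fin n => quantumInt (2 * (i.rev : ℕ) + 1) (z j) (w j)).det =
      ∏ i, ∏ j ∈ Ioi i, ((z i ^ 2 + w i ^ 2) - (z j ^ 2 + w j ^ 2)) := by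
  nontriviality A
  choose P monic degree eval using quantumInt_odd_eq_eval (A := A)
  simp_rw [eval _ _ _ (h _)]
  exact det_eval_of_monic (fun j => z j ^ 2 + w j ^ 2) (fun i => monic _) (fun i => degree _)

lemma prod_sub_dvd_det_quantumInt (h : ∀ j, z j * w j = 1) {m : Fin n → ℕ}
    (hm : (∀ i, Odd (m i)) ∨ ∀ i, Even (m i)) :
    ∏ i, ∏ j ∈ Ioi i, ((z i ^ 2 + w i ^ 2) - (z j ^ 2 + w j ^ 2)) ∣
      (Matrix.of fun i j : Fin n => quantumInt (m i) (z j) (w j)).det := by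
  nontriviality A
  obtain hm | hm := hm
  · choose P _ _ eval using quantumInt_odd_eq_eval (A := A)
    choose k hk using hm
    simp_rw [hk, eval _ _ _ (h _)]
    exact prod_sub_dvd_det_eval (fun j => z j ^ 2 + w j ^ 2) _
  · choose Q eval using quantumInt_even_eq_eval (A := A)
    choose k hk using fun i => even_iff_exists_two_mul.1 (hm i)
    simp_rw [hk, eval _ _ _ (h _)]
    have factor := Matrix.det_mul_row (fun j => z j + w j)
      (Matrix.of fun i j => (Q (k i)).eval (z j ^ 2 + w j ^ 2))
    simp only [Matrix.of_apply] at factor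
    rw [factor]
    exact (prod_sub_dvd_det_eval (fun j => z j ^ 2 + w j ^ 2) _).mul_left _

end Vandermonde

section ShiftedWeights

variable {n : ℕ}

/-- Twice the shifted highest weight `λ + ρ` of `B_{n+1}`, in `ε`-coordinates, where `λ` has
coordinates `a` in the basis of fundamental weights. -/
def shiftedWt (a : Fin (n + 1) → ℕ) (i : Fin (n + 1)) : ℕ :=
  a (Fin.last n) + 1 + 2 * ∑ k : Fin n with i ≤ k.castSucc, (a k.castSucc + 1)

lemma shiftedWt_castSucc (a : Fin (n + 1) → ℕ) (k : Fin n) :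
    shiftedWt a k.castSucc = shiftedWt a k.succ + 2 * (a k.castSucc + 1) := by
  have split : (univ.filter fun l : Fin n => k.castSucc ≤ l.castSucc) =
      insert k (univ.filter fun l => k.succ ≤ l.castSucc) := by
    ext l
    simp only [mem_filter_univ, mem_insert, Fin.le_def, Fin.val_castSucc, Fin.val_succ, Fin.ext_iff]
    omega
  rw [shiftedWt, split, sum_insert (by simp), shiftedWt]
  ring

lemma strictAnti_shiftedWt (a : Fin (n + 1) → ℕ) : StrictAnti (shiftedWt a) :=
  Fin.strictAnti_iff_succ_lt.2 fun k => by rw [shiftedWt_castSucc]; omega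

lemma shiftedWt_last (a : Fin (n + 1) → ℕ) : shiftedWt a (Fin.last n) = a (Fin.last n) + 1 := by
  simp [shiftedWt]

lemma shiftedWt_odd_or_even (a : Fin (n + 1) → ℕ) :
    (∀ i, Odd (shiftedWt a i)) ∨ ∀ i, Even (shiftedWt a i) := by
  obtain h | h := Nat.even_or_odd (a (Fin.last n))
  · exact .inl fun i => h.add_one.add_even (even_two_mul _)
  · exact .inr fun i => h.add_one.add (even_two_mul _)

lemma card_filter_le_castSucc (i : Fin (n + 1)) : #{k : Fin n | i ≤ k.castSucc} = (i.rev : ℕ) := by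
  induction i using Fin.lastCases with
  | last => simp
  | cast i =>
    simp only [Fin.castSucc_le_castSucc_iff, Fin.val_rev, Fin.val_castSucc, Nat.add_sub_add_right]
    rw [← Fin.card_Ici]
    congr 1
    ext
    simp

lemma shiftedWt_zero (i : Fin (n + 1)) : shiftedWt 0 i = 2 * (i.rev : ℕ) + 1 := by
  simp [shiftedWt, card_filter_le_castSucc, add_comm]

lemma epsWt_add_rhoY (a : Fin (n + 1) → ℕ) :
    epsWt .B (n + 1) a + rhoY .B (n + 1) = fun i => (shiftedWt a i / 2 : ℚ) := by
  ext i
  have card : (#{k : Fin n | i ≤ k.castSucc} : ℚ) = n - (i : ℕ) := by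
    rw [card_filter_le_castSucc, Fin.val_rev, Nat.add_sub_add_right, Nat.cast_sub (Fin.is_le i)]
  simp only [Pi.add_apply, epsWt, rhoY, cval, shiftedWt, sum_filter, Fin.sum_univ_castSucc,
    Nat.add_sub_cancel, Nat.lt_succ_self, dif_pos, ← Fin.le_def, if_pos (Fin.le_last i)]
  simp only [← sum_filter, Nat.cast_add, Nat.cast_mul, Nat.cast_sum, Nat.cast_one, Nat.cast_ofNat,
    sum_add_distrib, sum_const, nsmul_one, Nat.cast_id, card]
  simp only [Fin.last]
  ring

lemma rhoY_B : rhoY .B (n + 1) = fun i => (shiftedWt 0 i / 2 : ℚ) := by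
  have epsWt_zero : epsWt .B (n + 1) (0 : Fin (n + 1) → ℕ) = 0 := by
    ext
    simp [epsWt, cval]
  rw [← epsWt_add_rhoY, epsWt_zero, zero_add]

end ShiftedWeights

section Restriction

variable {n k : ℕ}

/-- The `B_n`-alternant with exponents `m / 2`, divided by `∏ⱼ (e^{ε_j/2} - e^{-ε_j/2})`. -/
def reducedAlternant (m : Fin n → ℕ) : CharRing n :=
  (Matrix.of fun i j => quantumInt (m i) (coordExp j (1 / 2)) (coordExp j (-(1 / 2)))).det

lemma altY_B_eq_mul_reducedAlternant (m : Fin n → ℕ) :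
    altY .B n (fun i => (m i / 2 : ℚ)) =
      (∏ j, (coordExp j (1 / 2) - coordExp j (-(1 / 2)))) * reducedAlternant m := by
  have factor := Matrix.det_mul_row
    (fun j : Fin n => coordExp j (1 / 2 : ℚ) - coordExp j (-(1 / 2)))
    (Matrix.of fun i j => quantumInt (m i) (coordExp j (1 / 2)) (coordExp j (-(1 / 2))))
  rw [altY_B_eq_det, reducedAlternant, ← factor]
  congr! 4 with i j
  rw [Matrix.of_apply, mul_comm, quantumInt_mul_sub, coordExp_pow, coordExp_pow]
  ring_nf

lemma exists_reducedAlternant_mul_eq (a : Fin (n + 1) → ℕ) :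
    ∃ f, reducedAlternant (shiftedWt 0) * f = reducedAlternant (shiftedWt a) ∧
      IsCharY .B (n + 1) a f := by
  obtain ⟨f, hf⟩ := prod_sub_dvd_det_quantumInt (fun j => coordExp_mul_coordExp_neg j _)
    (shiftedWt_odd_or_even a)
  have hρ : reducedAlternant (shiftedWt 0) * f = reducedAlternant (shiftedWt a) := by
    simp only [reducedAlternant, shiftedWt_zero]
    rw [det_quantumInt_odd fun j => coordExp_mul_coordExp_neg j _, hf]
  refine ⟨f, hρ, ?_⟩
  rw [IsCharY, epsWt_add_rhoY a, rhoY_B, altY_B_eq_mul_reducedAlternant,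
    altY_B_eq_mul_reducedAlternant, mul_assoc, hρ]

/-- The weights `x - y` and `x + y` for all pairs of a member `x` and a later member `y` of a list;
for the list of the restrictions of `ε_1, …, ε_n` these are the restrictions of the long positive
roots of `B_n`. -/
def signedPairs {M : Type*} [AddGroup M] : List M → List M
  | [] => []
  | x :: xs => (xs.flatMap fun y => [x - y, x + y]) ++ signedPairs xs

lemma map_signedPairs {M N : Type*} [AddGroup M] [AddGroup N] (φ : M →+ N) (l : List M) :
    signedPairs (l.map φ) = (signedPairs l).map φ := by
  induction l with
  | nil => rfl
  | cons x l ih => simp [signedPairs, ih, List.flatMap_map, List.map_flatMap]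

lemma prod_sub_eq_prod_signedPairs (w : Fin n → Fin k → ℚ) :
    ∏ i, ∏ j ∈ Ioi i, ((mono (w i) + mono (-w i)) - (mono (w j) + mono (-w j))) =
      mono (∑ i, (i.rev : ℕ) • w i) *
        ((signedPairs (List.ofFn w)).map fun γ => 1 - mono (-γ)).prod := by
  induction n with
  | zero => simp [signedPairs, mono_zero]
  | succ n ih =>
    have factor (x y : Fin k → ℚ) : (mono x + mono (-x)) - (mono y + mono (-y)) =
        mono x * ((1 - mono (-(x - y))) * (1 - mono (-(x + y)))) := by
      simp only [mul_sub, sub_mul, mul_one, one_mul, mono_mul_mono]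
      rw [show x + -(x - y) = y by abel, show x + -(x + y) = -y by abel,
        show x + (-(x - y) + -(x + y)) = -x by abel]
      ring
    rw [Fin.prod_univ_succ, Fin.prod_Ioi_zero, List.ofFn_succ, signedPairs, List.map_append,
      List.prod_append]
    have pairs : (((List.ofFn fun i => w i.succ).flatMap fun y => [w 0 - y, w 0 + y]).map
        fun γ => 1 - mono (-γ)).prod =
          ∏ i : Fin n, (1 - mono (-(w 0 - w i.succ))) * (1 - mono (-(w 0 + w i.succ))) := by
      rw [List.map_flatMap, List.flatMap, List.prod_flatten, List.map_ofFn, List.map_ofFn,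
        List.prod_ofFn]
      simp
    have shift : mono (∑ i : Fin (n + 1), (i.rev : ℕ) • w i) =
        mono (w 0) ^ n * mono (∑ i : Fin n, (i.rev : ℕ) • w i.succ) := by
      rw [Fin.sum_univ_succ, ← mono_mul_mono, mono_pow]
      simp [Fin.rev_succ]
    simp_rw [pairs, Fin.prod_Ioi_succ, ih fun i => w i.succ, factor (w 0), shift]
    rw [prod_mul_distrib, prod_const, card_fin]
    ring

/-- The Weyl denominator `∏ (e^{w/2} - e^{-w/2})` of a list of positive roots, where the zero
weight in the last position is skipped. -/
def weylDenom (w : Fin (n + 1) → Fin k → ℚ) : CharRing k :=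
  ∏ j : Fin n, (mono ((1 / 2 : ℚ) • w j.castSucc) - mono (-((1 / 2 : ℚ) • w j.castSucc)))

lemma weylDenom_mul_restrict_reducedAlternant {w : Fin (n + 1) → Fin k → ℚ}
    (hw : w (Fin.last n) = 0) (m : Fin (n + 1) → ℕ) :
    weylDenom w * restrict w (reducedAlternant m) =
      restrict (fun j => w j.castSucc) (specAlternant m) := by
  set scale : Fin (n + 1) → CharRing k := Fin.snoc
    (fun j => mono ((1 / 2 : ℚ) • w j.castSucc) - mono (-((1 / 2 : ℚ) • w j.castSucc))) 1
    with h_scale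
  have prod_scale : ∏ j, scale j = weylDenom w := by
    simp [h_scale, Fin.prod_univ_castSucc, weylDenom]
  rw [← prod_scale, reducedAlternant, specAlternant, RingHom.map_det, RingHom.map_det,
    ← Matrix.det_mul_row]
  congr 1
  ext1 i j
  simp only [RingHom.mapMatrix_apply, Matrix.map_apply, Matrix.of_apply, map_quantumInt,
    restrict_coordExp]
  induction j using Fin.lastCases with
  | last => simp [h_scale, hw, mono_zero, quantumInt_one_one]
  | cast j =>
    simp only [h_scale, Fin.snoc_castSucc, map_sub, restrict_coordExp, neg_smul]
    rw [mul_comm, quantumInt_mul_sub, mono_pow, mono_pow]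
    congr 2 <;> module

lemma restrict_reducedAlternant_rho (w : Fin (n + 1) → Fin k → ℚ) :
    restrict w (reducedAlternant (shiftedWt 0)) = mono (∑ i, (i.rev : ℕ) • w i) *
      ((signedPairs (List.ofFn w)).map fun γ => 1 - mono (-γ)).prod := by
  simp only [reducedAlternant, shiftedWt_zero]
  rw [det_quantumInt_odd fun j => coordExp_mul_coordExp_neg j _, ← prod_sub_eq_prod_signedPairs]
  simp only [map_prod, map_sub, map_add, coordExp_pow, restrict_coordExp]
  norm_num

end Restriction

section Rearrangement

variable {ι : Type*} {I : Finset ι} {m c : ι → ℤ} {θ g : ℤ}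

lemma sum_comp_perm_add_le [DecidableEq ι] (σ : Equiv.Perm ι) (hin : ∀ i ∈ I, θ + g ≤ m i)
    (hout : ∀ i ∉ I, m i ≤ θ) :
    ∑ i ∈ I, m (σ i) + g * #(I \ I.map σ.toEmbedding) ≤ ∑ i ∈ I, m i := by
  set I' := I.map σ.toEmbedding with hI'
  have card_eq : #(I' \ I) = #(I \ I') := card_sdiff_comm (card_map _)
  have lower : #(I \ I') • (θ + g) ≤ ∑ i ∈ I \ I', m i :=
    card_nsmul_le_sum _ _ _ fun i hi => hin i (mem_sdiff.1 hi).1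
  have upper : ∑ i ∈ I' \ I, m i ≤ #(I' \ I) • θ :=
    sum_le_card_nsmul _ _ _ fun i hi => hout i (mem_sdiff.1 hi).2
  have sum_I' : ∑ i ∈ I, m (σ i) = ∑ i ∈ I', m i := by simp [hI']
  have split := sum_sdiff_sub_sum_sdiff (s₁ := I') (s₂ := I) (f := m)
  rw [nsmul_eq_mul] at lower upper
  rw [card_eq] at upper
  linarith

lemma preserves_of_sum_lt (σ : Equiv.Perm ι) (hm : ∀ i, 0 ≤ m i) (hθ : 0 ≤ θ) (hg : 0 ≤ g)
    (hin : ∀ i ∈ I, θ + g ≤ m i) (hout : ∀ i ∉ I, m i ≤ θ)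
    (hc : ∀ i ∈ I, c i = m (σ i) ∨ c i = -m (σ i))
    (hlt : ∑ i ∈ I, m i - ∑ i ∈ I, c i < g) :
    (∀ i, σ i ∈ I ↔ i ∈ I) ∧ ∀ i ∈ I, c i = m (σ i) := by
  classical
  have perm_le := sum_comp_perm_add_le σ hin hout
  have signed_le (i : ι) (hi : i ∈ I) : c i ≤ m (σ i) := by
    have := hm (σ i)
    obtain h | h := hc i hi <;> omega
  have sum_le := sum_le_sum signed_le
  have subset : I ⊆ I.map σ.toEmbedding := by
    rw [← sdiff_eq_empty_iff_subset, ← card_eq_zero]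
    by_contra hne
    have : 1 ≤ (#(I \ I.map σ.toEmbedding) : ℤ) := by exact_mod_cast Nat.one_le_iff_ne_zero.2 hne
    nlinarith
  have map_eq : I.map σ.toEmbedding = I := (eq_of_subset_of_card_le subset (card_map _).le).symm
  have mem_iff (i : ι) : σ i ∈ I ↔ i ∈ I := by
    conv_lhs => rw [← map_eq]
    simp
  refine ⟨mem_iff, fun i hi => (hc i hi).resolve_right fun hneg => ?_⟩
  have rest_le : ∑ j ∈ I.erase i, c j ≤ ∑ j ∈ I.erase i, m (σ j) :=
    sum_le_sum fun j hj => signed_le j (mem_of_mem_erase hj)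
  rw [← add_sum_erase _ _ hi] at perm_le
  rw [← add_sum_erase _ c hi] at hlt
  have := hin _ ((mem_iff i).2 hi)
  have : 0 ≤ g * (#(I \ I.map σ.toEmbedding) : ℤ) := by positivity
  linarith

end Rearrangement

section Lowering

variable {n : ℕ}

/-- Twice the weight `m / 2 - ∑ J, β J • α J` of `B_n`, where `α J = ε_J - ε_{J+1}` (with
`ε_{n+1} = 0`) are the simple roots. -/
def loweredWt (m : Fin (n + 1) → ℕ) (β : Fin n → ℕ) (j : Fin n) : ℤ :=
  m j.castSucc + 2 * (Fin.cons 0 β : Fin (n + 1) → ℕ) j.castSucc - 2 * β j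

lemma sum_Iic_sub_loweredWt (m : Fin (n + 1) → ℕ) (β : Fin n → ℕ) (J : Fin n) :
    ∑ j ∈ Iic J, ((m j.castSucc : ℤ) - loweredWt m β j) = 2 * β J := by
  obtain _ | n := n
  · exact J.elim0
  induction J using Fin.induction with
  | zero => simp [loweredWt, show Iic (0 : Fin (n + 1)) = {0} from rfl]
  | succ J ih =>
    have insert_eq : Iic J.succ = insert J.succ (Iic J.castSucc) := by
      ext i
      simp only [mem_Iic, mem_insert, Fin.le_def, Fin.ext_iff, Fin.val_succ, Fin.val_castSucc]
      omega
    rw [insert_eq, sum_insert (by simp), ih, loweredWt, ← Fin.succ_castSucc, Fin.cons_succ]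
    ring

lemma eq_of_sum_Iic_eq {f g : Fin n → ℤ} (h : ∀ J, ∑ j ∈ Iic J, f j = ∑ j ∈ Iic J, g j) :
    f = g := by
  ext J
  induction J using WellFoundedLT.induction with
  | ind J ih =>
    have hJ := h J
    rw [← Iio_insert, sum_insert (by simp), sum_insert (by simp),
      sum_congr rfl fun j hj => ih j (mem_Iio.1 hj)] at hJ
    exact add_right_cancel hJ

lemma loweredWt_injective (m : Fin (n + 1) → ℕ) : Function.Injective (loweredWt m) := by
  intro β γ h
  ext J
  have hβ := sum_Iic_sub_loweredWt m β J
  rw [h, sum_Iic_sub_loweredWt] at hβ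
  omega

variable {a : Fin (n + 1) → ℕ} {σ : Equiv.Perm (Fin (n + 1))} {c : Fin n → ℤ}

lemma sum_Iic_castSucc {M : Type*} [AddCommMonoid M] (f : Fin (n + 1) → M) (J : Fin n) :
    ∑ i ∈ Iic J.castSucc, f i = ∑ j ∈ Iic J, f j.castSucc := by
  rw [← Fin.map_castSuccEmb_Iic, sum_map]
  rfl

lemma shiftedWt_succ_add_le (a : Fin (n + 1) → ℕ) {J : Fin n} {i : Fin (n + 1)}
    (hi : i ∈ Iic J.castSucc) :
    (shiftedWt a J.succ + 2 * (a J.castSucc + 1) : ℤ) ≤ shiftedWt a i := by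
  have := (strictAnti_shiftedWt a).antitone (mem_Iic.1 hi)
  rw [shiftedWt_castSucc] at this
  exact_mod_cast this

lemma shiftedWt_le_succ (a : Fin (n + 1) → ℕ) {J : Fin n} {i : Fin (n + 1)}
    (hi : i ∉ Iic J.castSucc) : (shiftedWt a i : ℤ) ≤ shiftedWt a J.succ := by
  rw [mem_Iic, not_le, Fin.castSucc_lt_iff_succ_le] at hi
  exact_mod_cast (strictAnti_shiftedWt a).antitone hi

lemma sum_Iic_le_shiftedWt
    (hc : ∀ j : Fin n, c j = shiftedWt a (σ j.castSucc) ∨ c j = -shiftedWt a (σ j.castSucc))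
    (J : Fin n) : ∑ j ∈ Iic J, c j ≤ ∑ j ∈ Iic J, (shiftedWt a j.castSucc : ℤ) := by
  have perm_le := sum_comp_perm_add_le σ (fun _ => shiftedWt_succ_add_le a (J := J))
    fun _ => shiftedWt_le_succ a
  rw [sum_Iic_castSucc, sum_Iic_castSucc] at perm_le
  have signed_le : ∑ j ∈ Iic J, c j ≤ ∑ j ∈ Iic J, (shiftedWt a (σ j.castSucc) : ℤ) :=
    sum_le_sum fun j _ => by obtain h | h := hc j <;> omega
  exact signed_le.trans (le_of_add_le_of_nonneg_left perm_le (by positivity))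

lemma preserves_Iic_of_sum_le
    (hc : ∀ j : Fin n, c j = shiftedWt a (σ j.castSucc) ∨ c j = -shiftedWt a (σ j.castSucc))
    {J : Fin n} (hJ : ∑ j ∈ Iic J, ((shiftedWt a j.castSucc : ℤ) - c j) ≤ 2 * a J.castSucc) :
    (∀ i, σ i ≤ J.castSucc ↔ i ≤ J.castSucc) ∧ ∀ j ≤ J, c j = shiftedWt a (σ j.castSucc) := by
  obtain ⟨mem_iff, plus⟩ := preserves_of_sum_lt (I := Iic J.castSucc)
    (c := (Fin.snoc c 0 : Fin (n + 1) → ℤ)) σ (fun _ => Nat.cast_nonneg _) (Nat.cast_nonneg _)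
    (by positivity) (fun _ => shiftedWt_succ_add_le a) (fun _ => shiftedWt_le_succ a)
    (fun i hi => by
      obtain ⟨j, rfl⟩ := Fin.exists_castSucc_eq.2
        ((mem_Iic.1 hi).trans_lt (Fin.castSucc_lt_last J)).ne
      simpa using hc j)
    (by
      rw [sum_Iic_castSucc, sum_Iic_castSucc, ← sum_sub_distrib]
      simp only [Fin.snoc_castSucc]
      omega)
  exact ⟨by simpa using mem_iff, fun j hj => by simpa using plus j.castSucc (by simpa using hj)⟩

lemma specNumer_eq_sum (m : Fin (n + 1) → ℕ) (c : Fin n → ℤ) :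
    specNumer m c = ∑ σ : Equiv.Perm (Fin (n + 1)), (Equiv.Perm.sign σ : ℤ) *
      ((∏ j : Fin n, signedDelta (m (σ j.castSucc) : ℤ) (c j)) * m (σ (Fin.last n))) := by
  simp [specNumer, Matrix.det_apply, Fin.prod_univ_castSucc, Units.smul_def]

lemma signedDelta_self {x : ℤ} (hx : 0 < x) : signedDelta x x = 1 := by
  rw [signedDelta, if_pos rfl, if_neg (by omega), sub_zero]

lemma shiftedWt_pos (a : Fin (n + 1) → ℕ) (i : Fin (n + 1)) : 0 < shiftedWt a i := by
  rw [shiftedWt]; omega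

variable {a' : Fin (n + 1) → ℕ} {β : Fin n → ℕ}

lemma shiftedWt_comp_perm_sub (hlast : a (Fin.last n) = a' (Fin.last n))
    (hσ : ∀ k : Fin n, a k.castSucc ≠ a' k.castSucc → ∀ i, σ i ≤ k.castSucc ↔ i ≤ k.castSucc)
    (i : Fin (n + 1)) : (shiftedWt a' (σ i) : ℤ) - shiftedWt a (σ i) =
      shiftedWt a' i - shiftedWt a i := by
  have difference (i : Fin (n + 1)) : (shiftedWt a' i : ℤ) - shiftedWt a i =
      2 * ∑ k : Fin n, if i ≤ k.castSucc then (a' k.castSucc : ℤ) - a k.castSucc else 0 := by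
    simp only [shiftedWt, hlast, ← sum_filter, sum_sub_distrib]
    push_cast
    simp only [sum_add_distrib]
    ring
  rw [difference, difference]
  congr 1
  refine sum_congr rfl fun k _ => ?_
  by_cases hk : a k.castSucc = a' k.castSucc
  · simp [hk]
  · simp only [hσ k hk i]

lemma signedDelta_shiftedWt_congr (hlast : a (Fin.last n) = a' (Fin.last n))
    (hβ : ∀ k : Fin n, a k.castSucc = a' k.castSucc ∨
      β k ≤ a k.castSucc ∧ β k ≤ a' k.castSucc)
    (hne : ∏ j : Fin n, signedDelta (shiftedWt a (σ j.castSucc) : ℤ)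
      (loweredWt (shiftedWt a) β j) ≠ 0) :
    (∏ j : Fin n, signedDelta (shiftedWt a (σ j.castSucc) : ℤ) (loweredWt (shiftedWt a) β j)) *
        (shiftedWt a (σ (Fin.last n)) : ℤ) =
      (∏ j : Fin n, signedDelta (shiftedWt a' (σ j.castSucc) : ℤ)
        (loweredWt (shiftedWt a') β j)) * (shiftedWt a' (σ (Fin.last n)) : ℤ) := by
  have hc (j : Fin n) := signedDelta_ne_zero (prod_ne_zero_iff.1 hne j (mem_univ j))
  have preserves (k : Fin n) (hk : a k.castSucc ≠ a' k.castSucc) := by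
    refine preserves_Iic_of_sum_le hc (J := k) ?_
    rw [sum_Iic_sub_loweredWt]
    have := (hβ k).resolve_left hk
    omega
  have shift := shiftedWt_comp_perm_sub hlast fun k hk => (preserves k hk).1
  have last_eq : shiftedWt a' (σ (Fin.last n)) = shiftedWt a (σ (Fin.last n)) := by
    have := shift (Fin.last n)
    rw [shiftedWt_last, shiftedWt_last, hlast] at this
    omega
  rw [last_eq]
  congr 1
  refine prod_congr rfl fun j _ => ?_
  have lowered_sub : loweredWt (shiftedWt a') β j - loweredWt (shiftedWt a) β j =
      shiftedWt a' j.castSucc - shiftedWt a j.castSucc := by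
    simp only [loweredWt]; ring
  by_cases hj : ∃ k, j ≤ k ∧ a k.castSucc ≠ a' k.castSucc
  · obtain ⟨k, hjk, hk⟩ := hj
    have plus := (preserves k hk).2 j hjk
    have plus' : loweredWt (shiftedWt a') β j = shiftedWt a' (σ j.castSucc) := by
      linarith [shift j.castSucc]
    rw [plus, plus', signedDelta_self (by exact_mod_cast shiftedWt_pos _ _),
      signedDelta_self (by exact_mod_cast shiftedWt_pos _ _)]
  · push Not at hj
    have unchanged : shiftedWt a' j.castSucc = shiftedWt a j.castSucc := by
      simp only [shiftedWt, hlast]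
      rw [sum_congr rfl fun k hk => by rw [← hj k (by simpa using hk)]]
    have := shift j.castSucc
    rw [show shiftedWt a' (σ j.castSucc) = shiftedWt a (σ j.castSucc) by omega,
      show loweredWt (shiftedWt a') β j = loweredWt (shiftedWt a) β j by omega]

lemma specNumer_shiftedWt_congr (hlast : a (Fin.last n) = a' (Fin.last n))
    (hβ : ∀ k : Fin n, a k.castSucc = a' k.castSucc ∨
      β k ≤ a k.castSucc ∧ β k ≤ a' k.castSucc) :
    specNumer (shiftedWt a) (loweredWt (shiftedWt a) β) =
      specNumer (shiftedWt a') (loweredWt (shiftedWt a') β) := by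
  rw [specNumer_eq_sum, specNumer_eq_sum]
  refine sum_congr rfl fun σ _ => congrArg _ ?_
  by_cases h : ∏ j : Fin n, signedDelta (shiftedWt a (σ j.castSucc) : ℤ)
      (loweredWt (shiftedWt a) β j) = 0
  · by_cases h' : ∏ j : Fin n, signedDelta (shiftedWt a' (σ j.castSucc) : ℤ)
        (loweredWt (shiftedWt a') β j) = 0
    · rw [h, h', zero_mul, zero_mul]
    · exact (signedDelta_shiftedWt_congr hlast.symm
        (fun k => (hβ k).imp Eq.symm And.symm) h').symm
  · exact signedDelta_shiftedWt_congr hlast hβ h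

lemma specNumer_loweredWt_zero (a : Fin (n + 1) → ℕ) :
    specNumer (shiftedWt a) (loweredWt (shiftedWt a) 0) = a (Fin.last n) + 1 := by
  have lowered (j : Fin n) : loweredWt (shiftedWt a) 0 j = shiftedWt a j.castSucc := by
    rw [loweredWt, show (Fin.cons 0 0 : Fin (n + 1) → ℕ) = 0 from Matrix.cons_zero_zero]
    simp
  rw [specNumer, Matrix.det_of_isUpperTriangular]
  · simp [Fin.prod_univ_castSucc, lowered, signedDelta_self, shiftedWt_pos, shiftedWt_last]
  · intro i j hji
    obtain ⟨j, rfl⟩ := Fin.exists_castSucc_eq.2 (hji.trans_le (Fin.le_last i)).ne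
    have : shiftedWt a i < shiftedWt a j.castSucc := strictAnti_shiftedWt a hji
    simp only [Matrix.of_apply, Fin.snoc_castSucc, lowered]
    rw [signedDelta, if_neg (by omega), if_neg (by omega), sub_zero]

lemma exists_loweredWt_eq
    (hc : ∀ j : Fin n, c j = shiftedWt a (σ j.castSucc) ∨ c j = -shiftedWt a (σ j.castSucc)) :
    ∃ β, loweredWt (shiftedWt a) β = c := by
  have even_sub (j : Fin n) : (2 : ℤ) ∣ shiftedWt a j.castSucc - c j := by
    obtain ha | ha := shiftedWt_odd_or_even a <;> obtain h | h := hc j <;>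
      have h₁ := ha j.castSucc <;> have h₂ := ha (σ j.castSucc) <;>
      grind
  have even_sum (J : Fin n) := dvd_sum fun j (_ : j ∈ Iic J) => even_sub j
  have sum_nonneg (J : Fin n) : 0 ≤ ∑ j ∈ Iic J, ((shiftedWt a j.castSucc : ℤ) - c j) := by
    rw [sum_sub_distrib]
    exact sub_nonneg.2 (sum_Iic_le_shiftedWt hc J)
  refine ⟨fun J => ((∑ j ∈ Iic J, (shiftedWt a j.castSucc - c j)) / 2).toNat, ?_⟩
  have sub_eq := eq_of_sum_Iic_eq (f := fun j => (shiftedWt a j.castSucc : ℤ) - loweredWt _ _ j)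
    (g := fun j => (shiftedWt a j.castSucc : ℤ) - c j) fun J => by
      rw [sum_Iic_sub_loweredWt, Int.toNat_of_nonneg (Int.ediv_nonneg (sum_nonneg J) zero_le_two),
        Int.mul_ediv_cancel' (even_sum J)]
  ext j
  simpa using congrFun sub_eq j

lemma exists_superset_specAlternant_eq_sum (a : Fin (n + 1) → ℕ) (T : Finset (Fin n → ℕ)) :
    ∃ s ⊇ T, specAlternant (shiftedWt a) = ∑ β ∈ s,
      specNumer (shiftedWt a) (loweredWt (shiftedWt a) β) •
        mono fun j => (loweredWt (shiftedWt a) β j / 2 : ℚ) := by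
  set F := specAlternant (shiftedWt a) with hF
  set halfLowered : (Fin n → ℕ) → Fin n → ℚ := fun β j => loweredWt (shiftedWt a) β j / 2
    with h_half
  have injective : Function.Injective halfLowered := by
    intro β γ h
    refine loweredWt_injective (shiftedWt a) (funext fun j => ?_)
    have := congrFun h j
    simp only [h_half, div_left_inj' (two_ne_zero' ℚ)] at this
    exact_mod_cast this
  have coeff_eq (β : Fin n → ℕ) := coeff_specAlternant (shiftedWt a) (loweredWt (shiftedWt a) β)
  have surjective (u : Fin n → ℚ) (hu : u ∈ F.coeff.support) : u ∈ Set.range halfLowered := by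
    obtain ⟨σ, hσ⟩ := exists_perm_of_coeff_specAlternant_ne_zero (Finsupp.mem_support_iff.1 hu)
    have (j : Fin n) : ∃ c : ℤ, u j = c / 2 ∧
        (c = shiftedWt a (σ j.castSucc) ∨ c = -shiftedWt a (σ j.castSucc)) := by
      obtain h | h := hσ j
      · exact ⟨_, by rw [h, Int.cast_natCast], .inl rfl⟩
      · exact ⟨_, by rw [h, Int.cast_neg, Int.cast_natCast, neg_div], .inr rfl⟩
    choose c hu hc using this
    obtain ⟨β, rfl⟩ := exists_loweredWt_eq hc
    exact ⟨β, funext fun j => (hu j).symm⟩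
  refine ⟨T ∪ F.coeff.support.preimage halfLowered injective.injOn, subset_union_left, ?_⟩
  simp only [← coeff_eq, ← hF]
  rw [sum_union_eq_right]
  · rw [sum_preimage halfLowered _ injective.injOn fun u => F.coeff u • mono u]
    · exact eq_sum_coeff_smul_mono F
    · exact fun u hu hu' => absurd (surjective u hu) hu'
  · intro β _ hβ
    rw [mem_preimage, Finsupp.notMem_support_iff] at hβ
    exact smul_eq_zero_of_left hβ _

end Lowering

section PartitionFunction

lemma eq_zero_of_forall_eq_sub {M : Type*} [AddCommGroup M] {g : M → ℤ} {γ x : M}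
    (hg : ∀ y, g y = g (y - γ)) (hx : ∀ᶠ i : ℕ in Filter.atTop, g (x - i • γ) = 0) : g x = 0 := by
  have iterate (i : ℕ) : g x = g (x - i • γ) := by
    induction i with
    | zero => simp
    | succ i ih => rw [ih, hg, succ_nsmul, sub_sub]
  obtain ⟨i, hi⟩ := hx.exists
  rw [iterate i, hi]

variable {M : Type*} [AddCommGroup M] [PartialOrder M] [DecidableEq M] [DecidableLE M]

/-- The number of ways of writing `x` as a combination of the members of the list `Γ` with natural
coefficients, provided that `Γ` is positive and the height `h`, which bounds the search, is strictly
monotone. -/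
def partitionCount (h : M → ℤ) : List M → M → ℕ
  | [], x => if x = 0 then 1 else 0
  | γ :: Γ, x =>
    if x = 0 then 1 else if 0 ≤ x then
      partitionCount h Γ x + ((List.range (h x / h γ).toNat).map fun i =>
        partitionCount h Γ (x - (i + 1) • γ)).sum
    else 0

variable {h : M →+ ℤ} {Γ : List M}

lemma partitionCount_zero : partitionCount h Γ 0 = 1 := by
  cases Γ <;> rw [partitionCount, if_pos rfl]

lemma nonneg_of_partitionCount_ne_zero {x : M} (hx : partitionCount h Γ x ≠ 0) : 0 ≤ x := by
  contrapose! hx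
  have hne : x ≠ 0 := fun h0 => hx h0.ge
  cases Γ with
  | nil => rw [partitionCount, if_neg hne]
  | cons γ Γ => rw [partitionCount, if_neg hne, if_neg hx]

lemma eventually_partitionCount_sub_nsmul_eq_zero (hh : StrictMono h) {γ : M} (hγ : 0 < γ) (x : M) :
    ∀ᶠ i : ℕ in Filter.atTop, partitionCount h Γ (x - i • γ) = 0 := by
  have hγ_pos : 0 < h γ := map_zero h ▸ hh hγ
  filter_upwards [Filter.eventually_gt_atTop (h x).toNat] with i hi
  refine not_imp_comm.1 nonneg_of_partitionCount_ne_zero fun hx => ?_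
  have := map_zero h ▸ hh.monotone hx
  rw [map_sub, map_nsmul, nsmul_eq_mul] at this
  nlinarith [Int.self_le_toNat (h x)]

variable [IsOrderedAddMonoid M]

lemma partitionCount_cons (hh : StrictMono h) {γ : M} (hγ : 0 < γ) (x : M) :
    partitionCount h (γ :: Γ) x = partitionCount h Γ x + partitionCount h (γ :: Γ) (x - γ) := by
  have vanish {y : M} (hy : ¬0 ≤ y) (Δ : List M) : partitionCount h Δ y = 0 :=
    not_imp_comm.1 nonneg_of_partitionCount_ne_zero hy
  have vanish_sub {y : M} (hy : ¬0 ≤ y) (i : ℕ) : partitionCount h Γ (y - i • γ) = 0 :=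
    vanish (fun hyi => hy (hyi.trans (sub_le_self y (nsmul_nonneg hγ.le i)))) Γ
  have hγ_pos : 0 < h γ := map_zero h ▸ hh hγ
  by_cases hx : 0 ≤ x
  swap
  · rw [vanish hx, vanish hx, vanish fun hxγ => hx (hxγ.trans (sub_le_self x hγ.le))]
  obtain rfl | hx₀ := eq_or_ne x 0
  · rw [partitionCount_zero, partitionCount_zero, vanish (by simpa using hγ.not_ge)]
  rw [partitionCount, if_neg hx₀, if_pos hx, add_right_inj]
  by_cases hxγ : 0 ≤ x - γ
  swap
  · rw [vanish hxγ]
    simp [succ_nsmul', ← sub_sub, vanish_sub hxγ]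
  have hxγ_nonneg : 0 ≤ h (x - γ) / h γ :=
    Int.ediv_nonneg (map_zero h ▸ hh.monotone hxγ) hγ_pos.le
  have hdiv : h x / h γ = h (x - γ) / h γ + 1 := by
    rw [map_sub, Int.sub_ediv_of_dvd _ dvd_rfl, Int.ediv_self hγ_pos.ne']
    ring
  rw [hdiv, Int.toNat_add hxγ_nonneg zero_le_one, Int.toNat_one, List.range_succ_eq_map]
  simp only [List.map_cons, List.map_map, List.sum_cons, zero_add, one_smul, Function.comp_def]
  obtain hxγ₀ | hxγ₀ := eq_or_ne (x - γ) 0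
  · simp [hxγ₀, partitionCount_zero]
  · rw [partitionCount, if_neg hxγ₀, if_pos hxγ, add_right_inj]
    refine congrArg List.sum (List.map_congr_left fun i _ => congrArg _ ?_)
    rw [Nat.succ_eq_add_one, succ_nsmul', sub_sub]

lemma eventually_coeff_add_nsmul_eq_zero {k : ℕ} (F : CharRing k) (v : Fin k → ℚ)
    {u : Fin k → ℚ} (hu : u ≠ 0) : ∀ᶠ i : ℕ in Filter.atTop, F.coeff (v + i • u) = 0 := by
  have hinj : Function.Injective fun i : ℕ => v + i • u := (add_right_injective v).comp
    (injective_nsmul_iff_not_isOfFinAddOrder.2 (not_isOfFinAddOrder_of_isAddTorsionFree hu))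
  rw [← Nat.cofinite_eq_atTop]
  filter_upwards [hinj.tendsto_cofinite.eventually F.coeff.hasFiniteSupport.compl_mem_cofinite]
    with i hi
  simpa using hi

lemma coeff_eq_sum_partitionCount {k : ℕ} {F : CharRing k} {ι : M →+ (Fin k → ℚ)}
    (hι : Function.Injective ι) (hh : StrictMono h) (hΓ : ∀ γ ∈ Γ, 0 < γ) {B : Type*}
    {s : Finset B} {c : B → ℤ} {r : B → M} {t : Fin k → ℚ}
    (hF : F * (Γ.map fun γ => 1 - mono (-ι γ)).prod = ∑ b ∈ s, c b • mono (t - ι (r b))) (x : M) :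
    F.coeff (t - ι x) = ∑ b ∈ s, c b * partitionCount h Γ (x - r b) := by
  induction Γ generalizing F x with
  | nil =>
    rw [List.map_nil, List.prod_nil, mul_one] at hF
    rw [hF, coeff_sum]
    refine sum_congr rfl fun b _ => ?_
    rw [coeff_zsmul, coeff_mono]
    simp [partitionCount, sub_eq_zero, hι.eq_iff, eq_comm]
  | cons γ Γ ih =>
    rw [List.forall_mem_cons] at hΓ
    rw [List.map_cons, List.prod_cons, ← mul_assoc] at hF
    set P : List M → M → ℤ := fun Γ x => ∑ b ∈ s, c b * partitionCount h Γ (x - r b) with hP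
    have step (x : M) :
        F.coeff (t - ι x) - P (γ :: Γ) x = F.coeff (t - ι (x - γ)) - P (γ :: Γ) (x - γ) := by
      have coeff_step : (F * (1 - mono (-ι γ))).coeff (t - ι x) = P Γ x := ih hΓ.2 hF x
      have P_step : P (γ :: Γ) x = P Γ x + P (γ :: Γ) (x - γ) := by
        rw [hP, ← sum_add_distrib]
        refine sum_congr rfl fun b _ => ?_
        rw [partitionCount_cons hh hΓ.1, sub_right_comm x γ, Nat.cast_add, mul_add]
      rw [mul_sub, mul_one, AddMonoidAlgebra.coeff_sub, Finsupp.sub_apply, coeff_mul_mono]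
        at coeff_step
      rw [P_step, map_sub ι, show t - (ι x - ι γ) = t - ι x - -ι γ by abel]
      linarith
    have hιγ : ι γ ≠ 0 := (map_ne_zero_iff ι hι).2 hΓ.1.ne'
    refine sub_eq_zero.1 (eq_zero_of_forall_eq_sub
      (g := fun y => F.coeff (t - ι y) - P (γ :: Γ) y) step ?_)
    filter_upwards [eventually_coeff_add_nsmul_eq_zero F (t - ι x) hιγ,
      (Filter.eventually_all_finset s).2 fun b _ =>
        eventually_partitionCount_sub_nsmul_eq_zero (Γ := γ :: Γ) hh hΓ.1 (x - r b)] with i hFi hPi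
    have hP_zero : P (γ :: Γ) (x - i • γ) = 0 :=
      sum_eq_zero fun b hb => by rw [sub_right_comm, hPi b hb, Nat.cast_zero, mul_zero]
    rw [hP_zero, sub_zero, ← hFi, map_sub ι, map_nsmul, ← sub_add]

end PartitionFunction

section Multiplicity

variable {n : ℕ}

/-- The weight `∑ J, β J • (Ω J - Ω (J + 1))` to which the lowering vector `β` restricts, when the
standard weights `ε_J` restrict to `Ω J`. -/
def lowering {M : Type*} [AddCommGroup M] (Ω : Fin (n + 1) → M) (β : Fin n → ℕ) : M :=
  ∑ J, β J • (Ω J.castSucc - Ω J.succ)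

lemma map_lowering {M N : Type*} [AddCommGroup M] [AddCommGroup N] (φ : M →+ N)
    (Ω : Fin (n + 1) → M) (β : Fin n → ℕ) : φ (lowering Ω β) = lowering (φ ∘ Ω) β := by
  simp only [lowering, map_sum, map_nsmul, map_sub, Function.comp_apply]

lemma sum_loweredWt_smul {V : Type*} [AddCommGroup V] [Module ℚ V] {w : Fin (n + 1) → V}
    (hw : w (Fin.last n) = 0) (m : Fin (n + 1) → ℕ) (β : Fin n → ℕ) :
    ∑ j, (loweredWt m β j / 2 : ℚ) • w j.castSucc =
      ∑ j, (m j : ℚ) • (1 / 2 : ℚ) • w j - lowering w β := by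
  have shift : ∑ j : Fin n, (Fin.cons 0 β : Fin (n + 1) → ℕ) j.castSucc • w j.castSucc =
      ∑ j, β j • w j.succ := by
    have := Fin.sum_univ_castSucc fun j => (Fin.cons 0 β : Fin (n + 1) → ℕ) j • w j
    rw [Fin.sum_univ_succ, hw] at this
    simpa using this.symm
  rw [Fin.sum_univ_castSucc, hw]
  simp only [lowering, smul_sub, sum_sub_distrib, ← shift, smul_zero, add_zero]
  simp only [← sum_sub_distrib]
  refine sum_congr rfl fun j _ => ?_
  simp only [loweredWt, ← Nat.cast_smul_eq_nsmul ℚ, ← sub_smul, smul_smul]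
  push_cast
  congr 1
  ring

/-- The restriction of the highest weight `λ` together with the half-sum of the weights `w`, in
terms of `m = 2 (λ + ρ)`: the correction `∑ (n - i) w i` is the restriction of `ρ - ½ ∑ ε_i`. -/
def topWt {V : Type*} [AddCommGroup V] [Module ℚ V] (w : Fin (n + 1) → V)
    (m : Fin (n + 1) → ℕ) : V :=
  ∑ j, (m j : ℚ) • (1 / 2 : ℚ) • w j - ∑ i, (i.rev : ℕ) • w i

variable {k : ℕ} {a : Fin (n + 1) → ℕ} {f : CharRing (n + 1)}

lemma restrict_mul_weylDenom_mul_prod {w : Fin (n + 1) → Fin k → ℚ} (hw : w (Fin.last n) = 0)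
    (hf : reducedAlternant (shiftedWt 0) * f = reducedAlternant (shiftedWt a))
    {s : Finset (Fin n → ℕ)} (hs : specAlternant (shiftedWt a) = ∑ β ∈ s,
      specNumer (shiftedWt a) (loweredWt (shiftedWt a) β) •
        mono fun j => (loweredWt (shiftedWt a) β j / 2 : ℚ)) :
    restrict w f * weylDenom w * ((signedPairs (List.ofFn w)).map fun γ => 1 - mono (-γ)).prod =
      ∑ β ∈ s, specNumer (shiftedWt a) (loweredWt (shiftedWt a) β) •
        mono (topWt w (shiftedWt a) - lowering w β) := by
  have restricted : mono (∑ i : Fin (n + 1), (i.rev : ℕ) • w i) * (restrict w f * weylDenom w *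
      ((signedPairs (List.ofFn w)).map fun γ => 1 - mono (-γ)).prod) =
      ∑ β ∈ s, specNumer (shiftedWt a) (loweredWt (shiftedWt a) β) •
        mono (∑ j, (shiftedWt a j : ℚ) • (1 / 2 : ℚ) • w j - lowering w β) :=
    calc _ = weylDenom w * restrict w (reducedAlternant (shiftedWt 0) * f) := by
          rw [map_mul, restrict_reducedAlternant_rho]; ring
      _ = _ := by
          rw [hf, weylDenom_mul_restrict_reducedAlternant hw, hs, map_sum]
          refine sum_congr rfl fun β _ => ?_
          rw [map_zsmul, restrict_mono, sum_loweredWt_smul hw]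
  have := congrArg (mono (-∑ i : Fin (n + 1), (i.rev : ℕ) • w i) * ·) restricted
  simp only [mul_sum, mul_smul_comm, mono_mul_mono] at this
  rw [← mul_assoc, mono_mul_mono, neg_add_cancel, mono_zero, one_mul] at this
  rw [this]
  refine sum_congr rfl fun β _ => ?_
  rw [topWt, sub_right_comm, neg_add_eq_sub]

variable {M : Type*} [AddCommGroup M] [PartialOrder M] [IsOrderedAddMonoid M] [DecidableEq M]
  [DecidableLE M] {h : M →+ ℤ} {Ω : Fin (n + 1) → M} {ι : M →+ (Fin k → ℚ)}

lemma coeff_restrict_mul_weylDenom (hι : Function.Injective ι) (hΩ : Ω (Fin.last n) = 0)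
    (hh : StrictMono h) (hpos : ∀ γ ∈ signedPairs (List.ofFn Ω), 0 < γ)
    (hf : reducedAlternant (shiftedWt 0) * f = reducedAlternant (shiftedWt a))
    {x : M} {T : Finset (Fin n → ℕ)}
    (hT : ∀ β ∉ T, partitionCount h (signedPairs (List.ofFn Ω)) (x - lowering Ω β) = 0) :
    (restrict (ι ∘ Ω) f * weylDenom (ι ∘ Ω)).coeff (topWt (ι ∘ Ω) (shiftedWt a) - ι x) =
      ∑ β ∈ T, specNumer (shiftedWt a) (loweredWt (shiftedWt a) β) *
        partitionCount h (signedPairs (List.ofFn Ω)) (x - lowering Ω β) := by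
  obtain ⟨s, hTs, hs⟩ := exists_superset_specAlternant_eq_sum a T
  have factored := restrict_mul_weylDenom_mul_prod (w := ι ∘ Ω)
    (by rw [Function.comp_apply, hΩ, map_zero]) hf hs
  simp only [← List.map_ofFn, map_signedPairs, List.map_map, Function.comp_def (g := ι),
    ← map_lowering] at factored
  rw [coeff_eq_sum_partitionCount hι hh hpos factored]
  refine (sum_subset hTs fun β _ hβ => ?_).symm
  rw [hT β hβ, Nat.cast_zero, mul_zero]

end Multiplicity

section LaplaceExpansion

variable {α : Type*}

/-- The members of a list, each with the list of the remaining ones. -/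
def picks : List α → List (α × List α)
  | [] => []
  | x :: xs => (x, xs) :: (picks xs).map fun p => (p.1, x :: p.2)

/-- The determinant of the matrix with entries `c x`, where `x` runs through the list of rows and
`c` through the list of columns, by Laplace expansion along columns that skips vanishing entries. -/
def laplaceDet : List α → List (α → ℤ) → ℤ
  | _, [] => 1
  | rows, c :: cs => ((picks rows).map fun p =>
      if c p.1 = 0 then 0 else c p.1 * laplaceDet p.2 cs).foldr (· - ·) 0

lemma picks_ofFn {n : ℕ} (r : Fin (n + 1) → α) :
    picks (List.ofFn r) = List.ofFn fun i => (r i, List.ofFn fun j => r (i.succAbove j)) := by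
  induction n with
  | zero => simp [picks]
  | succ n ih =>
    rw [List.ofFn_succ, picks, ih, List.map_ofFn, List.ofFn_succ]
    simp [List.ofFn_succ, Fin.succ_succAbove_succ]

lemma foldr_sub_ofFn {n : ℕ} (t : Fin n → ℤ) :
    (List.ofFn t).foldr (· - ·) 0 = ∑ i : Fin n, (-1) ^ (i : ℕ) * t i := by
  induction n with
  | zero => simp
  | succ n ih =>
    rw [List.ofFn_succ, List.foldr_cons, ih, Fin.sum_univ_succ]
    simp [pow_succ, sub_eq_add_neg]

lemma laplaceDet_ofFn {n : ℕ} (r : Fin n → α) (c : Fin n → α → ℤ) :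
    laplaceDet (List.ofFn r) (List.ofFn c) = (Matrix.of fun i j => c j (r i)).det := by
  induction n with
  | zero => simp [laplaceDet]
  | succ n ih =>
    rw [List.ofFn_succ (f := c), laplaceDet, picks_ofFn, List.map_ofFn, foldr_sub_ofFn,
      Matrix.det_succ_column_zero]
    refine sum_congr rfl fun i _ => ?_
    rw [Function.comp_apply, ih, ite_eq_right_iff.2 fun h => by rw [h, zero_mul], mul_assoc]
    rfl

end LaplaceExpansion

section RestrictMult

variable {n k : ℕ} {M : Type*} [AddCommGroup M] [PartialOrder M]

lemma sum_le_of_lowering_le {h : M →+ ℤ} (hh : StrictMono h) {Ω : Fin (n + 1) → M}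
    (hdiff : ∀ J : Fin n, 0 < Ω J.castSucc - Ω J.succ) {x : M} {β : Fin n → ℕ}
    (hβ : lowering Ω β ≤ x) : (∑ J, β J : ℕ) ≤ h x := by
  refine le_trans ?_ (hh.monotone hβ)
  simp only [lowering, map_sum, map_nsmul, nsmul_eq_mul, Nat.cast_sum]
  exact sum_le_sum fun J _ =>
    le_mul_of_one_le_right (Nat.cast_nonneg _) ((map_zero h).symm.trans_lt (hh (hdiff J)))

variable [DecidableEq M] [DecidableLE M]

lemma specNumer_eq_laplaceDet (m : Fin (n + 1) → ℕ) (c : Fin n → ℤ) :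
    specNumer m c = laplaceDet (List.ofFn m)
      (List.ofFn (Fin.snoc (fun j x => signedDelta (x : ℤ) (c j)) Nat.cast)) := by
  rw [laplaceDet_ofFn, specNumer]
  congr 2
  ext i j
  cases j using Fin.lastCases <;> simp

/-- The contribution of the lowering vector `β` to `restrictMult h Ω a x`; the numerator is not
evaluated where the partition function vanishes. -/
def restrictTerm (h : M → ℤ) (Ω : Fin (n + 1) → M) (a : Fin (n + 1) → ℕ) (x : M)
    (β : Fin n → ℕ) : ℤ :=
  let P := partitionCount h (signedPairs (List.ofFn Ω)) (x - lowering Ω β)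
  if P = 0 then 0 else
    laplaceDet (List.ofFn (shiftedWt a)) (List.ofFn (Fin.snoc
      (fun j x => signedDelta (x : ℤ) (loweredWt (shiftedWt a) β j)) Nat.cast)) * P

/-- The coefficient at the top weight minus `x` in the restriction of the irreducible
`B_{n+1}`-character with highest weight `a` times the Weyl denominator, as a Kostant type sum over
the lowering vectors of height at most the height of `x`. -/
def restrictMult (h : M → ℤ) (Ω : Fin (n + 1) → M) (a : Fin (n + 1) → ℕ) (x : M) : ℤ :=
  ∑ s ∈ range ((h x).toNat + 1), ∑ β ∈ Finset.Nat.antidiagonalTuple n s, restrictTerm h Ω a x β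

lemma restrictTerm_eq (h : M → ℤ) (Ω : Fin (n + 1) → M) (a : Fin (n + 1) → ℕ) (x : M)
    (β : Fin n → ℕ) : restrictTerm h Ω a x β =
      specNumer (shiftedWt a) (loweredWt (shiftedWt a) β) *
        partitionCount h (signedPairs (List.ofFn Ω)) (x - lowering Ω β) := by
  rw [restrictTerm, ← specNumer_eq_laplaceDet]
  simp +contextual

lemma restrictMult_congr {h : M → ℤ} {Ω : Fin (n + 1) → M} {a a' : Fin (n + 1) → ℕ} {x : M}
    (hlast : a (Fin.last n) = a' (Fin.last n))
    (ha : ∀ β, partitionCount h (signedPairs (List.ofFn Ω)) (x - lowering Ω β) ≠ 0 →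
      ∀ k : Fin n, a k.castSucc = a' k.castSucc ∨ β k ≤ a k.castSucc ∧ β k ≤ a' k.castSucc) :
    restrictMult h Ω a x = restrictMult h Ω a' x := by
  refine sum_congr rfl fun s _ => sum_congr rfl fun β _ => ?_
  rw [restrictTerm_eq, restrictTerm_eq]
  by_cases hβ : partitionCount h (signedPairs (List.ofFn Ω)) (x - lowering Ω β) = 0
  · rw [hβ, Nat.cast_zero, mul_zero, mul_zero]
  · rw [specNumer_shiftedWt_congr hlast (ha β hβ)]

variable {h : M →+ ℤ} {Ω : Fin (n + 1) → M}

lemma restrictMult_zero (a : Fin (n + 1) → ℕ) : restrictMult h Ω a 0 = a (Fin.last n) + 1 := by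
  have count : partitionCount h (signedPairs (List.ofFn Ω)) (0 - lowering Ω 0) = 1 := by
    simp [lowering, partitionCount_zero]
  rw [restrictMult, map_zero, Int.toNat_zero, sum_range_one,
    Finset.Nat.antidiagonalTuple_zero_right, sum_singleton, restrictTerm_eq,
    specNumer_loweredWt_zero, count, Nat.cast_one, mul_one]

variable [IsOrderedAddMonoid M]

lemma coeff_restrict_mul_weylDenom_eq_restrictMult {ι : M →+ (Fin k → ℚ)}
    {a : Fin (n + 1) → ℕ} {f : CharRing (n + 1)} (hι : Function.Injective ι)
    (hΩ : Ω (Fin.last n) = 0) (hh : StrictMono h) (hpos : ∀ γ ∈ signedPairs (List.ofFn Ω), 0 < γ)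
    (hdiff : ∀ J : Fin n, 0 < Ω J.castSucc - Ω J.succ)
    (hf : reducedAlternant (shiftedWt 0) * f = reducedAlternant (shiftedWt a)) (x : M) :
    (restrict (ι ∘ Ω) f * weylDenom (ι ∘ Ω)).coeff (topWt (ι ∘ Ω) (shiftedWt a) - ι x) =
      restrictMult h Ω a x := by
  have disjoint : Set.PairwiseDisjoint (range ((h x).toNat + 1) : Set ℕ)
      (Finset.Nat.antidiagonalTuple n) := fun s _ s' _ hne => disjoint_left.2 fun β hβ hβ' =>
    hne <| (Finset.Nat.mem_antidiagonalTuple.1 hβ).symm.trans <|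
      Finset.Nat.mem_antidiagonalTuple.1 hβ'
  simp only [restrictMult, ← sum_biUnion disjoint, restrictTerm_eq]
  refine coeff_restrict_mul_weylDenom hι hΩ hh hpos hf fun β hβ => ?_
  contrapose! hβ
  have := sum_le_of_lowering_le hh hdiff (sub_nonneg.1 (nonneg_of_partitionCount_ne_zero hβ))
  exact mem_biUnion.2 ⟨_, mem_range.2 (by omega), Finset.Nat.mem_antidiagonalTuple.2 rfl⟩

end RestrictMult

section MultiplicityFree

variable {r : ℕ}

lemma slWt_castSucc (d : Fin r → ℕ) (k : Fin r) :
    slWt r d k.castSucc = slWt r d k.succ + d k := by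
  have split : (univ.filter fun j : Fin r => (k.castSucc : ℕ) ≤ j) =
      insert k (univ.filter fun j : Fin r => (k.succ : ℕ) ≤ j) := by
    ext j
    simp only [mem_filter_univ, mem_insert, Fin.val_castSucc, Fin.val_succ, Fin.ext_iff]
    omega
  rw [slWt, partLift, split, sum_insert (by simp), slWt, partLift]
  ring

lemma slWt_add_rhoA_castSucc (d : Fin r → ℕ) (k : Fin r) :
    (slWt r d + rhoA r) k.castSucc = (slWt r d + rhoA r) k.succ + (d k + 1) := by
  simp only [Pi.add_apply, slWt_castSucc, rhoA, Fin.val_castSucc, Fin.val_succ]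
  push_cast
  ring

lemma strictAnti_slWt_add_rhoA (d : Fin r → ℕ) : StrictAnti (slWt r d + rhoA r) :=
  Fin.strictAnti_iff_succ_lt.2 fun k => by
    rw [slWt_add_rhoA_castSucc]
    linarith [(d k).cast_nonneg (α := ℚ)]

lemma slWt_injective : Function.Injective (slWt r) := fun d d' h => funext fun k => by
  have hk := slWt_castSucc d k
  rw [h, slWt_castSucc d' k] at hk
  exact_mod_cast (add_left_cancel hk).symm

lemma eq_of_comp_perm_eq {m : ℕ} {v v' : Fin m → ℚ} (hv : StrictAnti v) (hv' : StrictAnti v')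
    {σ σ' : Equiv.Perm (Fin m)} (h : v ∘ σ = v' ∘ σ') : v = v' ∧ σ = σ' := by
  have range_eq : Set.range v = Set.range v' := by
    rw [← σ.surjective.range_comp, h, σ'.surjective.range_comp]
  obtain rfl : v = v' := by
    have := (StrictMono.range_inj hv.dual_right hv'.dual_right).1
      (by rw [Set.range_comp, range_eq, ← Set.range_comp])
    exact funext fun i => congrFun this i
  exact ⟨rfl, Equiv.coe_fn_injective (hv.injective.comp_left h)⟩

lemma coeff_altA (v p : Fin (r + 1) → ℚ) : (altA r v).coeff p =
    ∑ σ : Equiv.Perm (Fin (r + 1)), (Equiv.Perm.sign σ : ℤ) * if v ∘ σ = p then 1 else 0 := by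
  simp only [altA, coeff_sum, coeff_zsmul, coeff_mono]
  rfl

lemma exists_perm_of_coeff_altA_ne_zero {v p : Fin (r + 1) → ℚ} (h : (altA r v).coeff p ≠ 0) :
    ∃ σ : Equiv.Perm (Fin (r + 1)), v ∘ σ = p := by
  rw [coeff_altA] at h
  obtain ⟨σ, -, hσ⟩ := exists_ne_zero_of_sum_ne_zero h
  exact ⟨σ, of_not_not fun hne => hσ (by rw [if_neg hne, mul_zero])⟩

lemma coeff_altA_comp_perm {v : Fin (r + 1) → ℚ} (hv : StrictAnti v)
    (σ : Equiv.Perm (Fin (r + 1))) : (altA r v).coeff (v ∘ σ) = (Equiv.Perm.sign σ : ℤ) := by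
  rw [coeff_altA, sum_eq_single σ (fun τ _ hτ => ?_) (by simp), if_pos rfl, mul_one]
  rw [if_neg fun h => hτ (eq_of_comp_perm_eq hv hv h).2, mul_zero]

lemma coeff_altA_slWt_comp_perm (ν μ : Fin r → ℕ) (σ : Equiv.Perm (Fin (r + 1))) :
    (altA r (slWt r ν + rhoA r)).coeff ((slWt r μ + rhoA r) ∘ σ) =
      if ν = μ then (Equiv.Perm.sign σ : ℤ) else 0 := by
  split_ifs with h
  · rw [h, coeff_altA_comp_perm (strictAnti_slWt_add_rhoA μ)]
  · by_contra hν
    obtain ⟨τ, hτ⟩ := exists_perm_of_coeff_altA_ne_zero hν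
    have := (eq_of_comp_perm_eq (strictAnti_slWt_add_rhoA ν) (strictAnti_slWt_add_rhoA μ) hτ).1
    exact h (slWt_injective (add_right_cancel this))

lemma coeff_mul_altA_le_one {F : CharRing (r + 1)} {c : (Fin r → ℕ) →₀ ℕ} (hF : Decomp r F c)
    (hc : ∀ μ, c μ ≤ 1) (p : Fin (r + 1) → ℚ) : (F * altA r (rhoA r)).coeff p ≤ 1 := by
  simp only [show F * altA r (rhoA r) = _ from hF, Finsupp.sum, coeff_sum, coeff_zsmul]
  by_cases hp : ∃ μ, ∃ σ : Equiv.Perm (Fin (r + 1)), (slWt r μ + rhoA r) ∘ σ = p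
  · obtain ⟨μ, σ, rfl⟩ := hp
    simp only [coeff_altA_slWt_comp_perm, mul_ite, mul_zero, sum_ite_eq']
    have := hc μ
    obtain h | h := Int.units_eq_one_or (Equiv.Perm.sign σ) <;> rw [h] <;> push_cast <;>
      split_ifs <;> omega
  · rw [sum_eq_zero fun ν _ => ?_]
    · exact zero_le_one
    · rw [mul_eq_zero, or_iff_not_imp_right]
      exact fun hν => absurd ⟨ν, exists_perm_of_coeff_altA_ne_zero hν⟩ hp

end MultiplicityFree

section Wedge

open ExteriorAlgebra

variable {R : Type*} [CommRing R] {n : ℕ}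

lemma sum_det_updateRow_mul (f : Fin n → R) (M : Matrix (Fin n) (Fin n) R) :
    ∑ i, (M.updateRow i (f * M i)).det = (∑ j, f j) * M.det := by
  simp only [Matrix.det_apply, mul_sum]
  rw [sum_comm]
  refine sum_congr rfl fun σ _ => ?_
  have prod_update (j : Fin n) : ∏ k, M.updateRow (σ j) (f * M (σ j)) (σ k) k =
      f j * ∏ k, M (σ k) k := by
    rw [← mul_prod_erase univ (fun k => M (σ k) k) (mem_univ j), ← mul_assoc,
      ← mul_prod_erase univ _ (mem_univ j), Matrix.updateRow_self]
    refine congrArg _ (prod_congr rfl fun k hk => ?_)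
    rw [Matrix.updateRow_ne (σ.injective.ne (ne_of_mem_erase hk))]
  rw [← smul_sum, ← Equiv.sum_comp σ, mul_smul_comm, sum_mul]
  simp only [prod_update]

/-- The product of a list of vectors in the exterior algebra. -/
def wedge (u : List (Fin n → R)) : ExteriorAlgebra R (Fin n → R) := (u.map (ι R)).prod

/-- The image of `wedge u` under the derivation of the exterior algebra that multiplies vectors
by `f` componentwise. -/
def wedgeDeriv (f : Fin n → R) : List (Fin n → R) → ExteriorAlgebra R (Fin n → R)
  | [] => 0
  | x :: u => ι R (f * x) * wedge u + ι R x * wedgeDeriv f u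

lemma wedgeDeriv_ofFn (f : Fin n → R) {m : ℕ} (v : Fin m → Fin n → R) :
    wedgeDeriv f (List.ofFn v) = ∑ i, ιMulti R m (Function.update v i (f * v i)) := by
  induction m with
  | zero => simp [wedgeDeriv]
  | succ m ih =>
    simp only [ιMulti_apply, List.ofFn_succ, List.prod_cons] at ih ⊢
    rw [wedgeDeriv, ih, Fin.sum_univ_succ, mul_sum, wedge, List.map_ofFn]
    simp [Function.update_apply, Function.comp_def, Fin.succ_inj, (Fin.succ_ne_zero _).symm]

/-- The linear form on the exterior algebra that sends a product of `n` vectors to the determinant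
of the matrix with these rows, and vanishes in the other degrees. -/
def wedgeDet : ExteriorAlgebra R (Fin n → R) →ₗ[R] R :=
  liftAlternating (Pi.single n Matrix.detRowAlternating)

lemma wedgeDet_wedge_ofFn (v : Fin n → Fin n → R) :
    wedgeDet (wedge (List.ofFn v)) = Matrix.det v := by
  rw [wedge, List.map_ofFn]
  change wedgeDet (List.ofFn fun i => ι R (v i)).prod = _
  rw [← ιMulti_apply, wedgeDet, liftAlternating_apply_ιMulti, Pi.single_eq_same]
  rfl

lemma wedgeDet_wedgeDeriv (f : Fin n → R) (u : List (Fin n → R)) :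
    wedgeDet (wedgeDeriv f u) = (∑ j, f j) * wedgeDet (wedge u) := by
  obtain ⟨m, v, rfl⟩ : ∃ (m : ℕ) (v : Fin m → Fin n → R), u = List.ofFn v :=
    ⟨_, _, (List.ofFn_get u).symm⟩
  rw [wedgeDeriv_ofFn, map_sum]
  have wedge_ofFn : wedge (List.ofFn v) = ιMulti R m v := by
    rw [ιMulti_apply, wedge, List.map_ofFn]; rfl
  simp only [wedge_ofFn, wedgeDet, liftAlternating_apply_ιMulti]
  obtain rfl | hm := eq_or_ne m n
  · rw [Pi.single_eq_same]
    exact sum_det_updateRow_mul f v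
  · simp [Pi.single_eq_of_ne hm]

end Wedge

section AlternantCalculus

open ExteriorAlgebra

/-- The list obtained by moving `a` to its place in a decreasing list, and the sign of this
permutation; the sign is `0` when `a` already occurs in the list. -/
def signedInsert (a : ℤ) : List ℤ → ℤ × List ℤ
  | [] => (1, [a])
  | b :: l =>
    if b < a then (1, a :: b :: l) else if a = b then (0, []) else
      (-(signedInsert a l).1, b :: (signedInsert a l).2)

/-- The decreasing rearrangement of a list and the sign of the permutation, which is `0` for
lists with repetitions. -/
def signedSort : List ℤ → ℤ × List ℤ
  | [] => (1, [])
  | a :: l => ((signedSort l).1 * (signedInsert a (signedSort l).2).1,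
      (signedInsert a (signedSort l).2).2)

/-- Adds a term to a formal linear combination of lists. -/
def addTerm (p : ℤ × List ℤ) : List (ℤ × List ℤ) → List (ℤ × List ℤ)
  | [] => [p]
  | q :: S => if p.2 = q.2 then (p.1 + q.1, q.2) :: S else q :: addTerm p S

/-- The normal form, with decreasing lists and nonzero coefficients, of a linear combination of
alternants. -/
def collect (S : List (ℤ × List ℤ)) : List (ℤ × List ℤ) :=
  (S.foldr (fun p T => addTerm (p.1 * (signedSort p.2).1, (signedSort p.2).2) T) []).filter
    (·.1 ≠ 0)

/-- Multiplies a linear combination of alternants by a scalar. -/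
def scale (c : ℤ) (S : List (ℤ × List ℤ)) : List (ℤ × List ℤ) := S.map fun p => (c * p.1, p.2)

/-- The Leibniz rule for the derivation that sends the exponent `a` to the combination `b a`. -/
def leibniz (b : ℤ → List (ℤ × ℤ)) : List ℤ → List (ℤ × List ℤ)
  | [] => []
  | a :: l => (b a).map (fun p => (p.1, p.2 :: l)) ++ (leibniz b l).map fun p => (p.1, a :: p.2)

/-- The product of a linear combination of alternants with the power sum that acts on exponents
by `b`, see `evalAlternants_mulSum`. -/
def mulSum (b : ℤ → List (ℤ × ℤ)) (S : List (ℤ × List ℤ)) : List (ℤ × List ℤ) :=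
  collect (S.flatMap fun p => scale p.1 (leibniz b p.2))

variable {R : Type*} [CommRing R] {n : ℕ} (φ : ℤ → Fin n → R)

/-- The alternant with rows `φ a`, where `a` runs through a list of exponents. -/
def alternant (l : List ℤ) : R := wedgeDet (wedge (l.map φ))

/-- The value of a formal linear combination of alternants. -/
def evalAlternants (S : List (ℤ × List ℤ)) : R := (S.map fun p => p.1 • alternant φ p.2).sum

lemma ι_mul_wedge (a : ℤ) (l : List ℤ) : ι R (φ a) * wedge (l.map φ) =
    ((signedInsert a l).1 : ℤ) • wedge ((signedInsert a l).2.map φ) := by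
  induction l with
  | nil => simp [signedInsert, wedge]
  | cons b l ih =>
    have swap : ι R (φ a) * ι R (φ b) = -(ι R (φ b) * ι R (φ a)) :=
      eq_neg_of_add_eq_zero_left (ι_add_mul_swap _ _)
    rw [signedInsert]
    split_ifs with hlt heq
    · simp [wedge]
    · simp [wedge, heq, ← mul_assoc]
    · simp only [wedge, List.map_cons, List.prod_cons] at ih ⊢
      rw [← mul_assoc, swap, neg_mul, mul_assoc, ih, mul_smul_comm, neg_smul]

lemma wedge_map_eq_signedSort (l : List ℤ) :
    wedge (l.map φ) = (signedSort l).1 • wedge ((signedSort l).2.map φ) := by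
  induction l with
  | nil => simp [signedSort]
  | cons a l ih =>
    rw [List.map_cons, wedge, List.map_cons, List.prod_cons, ← wedge, ih, mul_smul_comm,
      ι_mul_wedge, smul_smul, signedSort]

lemma evalAlternants_addTerm (p : ℤ × List ℤ) (S : List (ℤ × List ℤ)) :
    evalAlternants φ (addTerm p S) = p.1 • alternant φ p.2 + evalAlternants φ S := by
  induction S with
  | nil => simp [addTerm, evalAlternants]
  | cons q S ih =>
    rw [addTerm]
    simp only [evalAlternants, List.map_cons, List.sum_cons] at ih ⊢
    split_ifs with h
    · rw [List.map_cons, List.sum_cons, add_smul, h, add_assoc]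
    · rw [List.map_cons, List.sum_cons, ih, add_left_comm]

lemma evalAlternants_collect (S : List (ℤ × List ℤ)) :
    evalAlternants φ (collect S) = evalAlternants φ S := by
  have filter_ne_zero (T : List (ℤ × List ℤ)) :
      evalAlternants φ (T.filter (·.1 ≠ 0)) = evalAlternants φ T := by
    induction T with
    | nil => rfl
    | cons p T ih =>
      rw [List.filter_cons]
      split_ifs with h <;> simp_all [evalAlternants]
  rw [collect, filter_ne_zero]
  induction S with
  | nil => rfl
  | cons p S ih =>
    rw [List.foldr_cons, evalAlternants_addTerm, ih]
    simp only [evalAlternants, List.map_cons, List.sum_cons, alternant,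
      wedge_map_eq_signedSort φ p.2, map_zsmul, smul_smul]

lemma evalAlternants_append (S T : List (ℤ × List ℤ)) :
    evalAlternants φ (S ++ T) = evalAlternants φ S + evalAlternants φ T := by
  simp [evalAlternants]

lemma evalAlternants_scale (c : ℤ) (S : List (ℤ × List ℤ)) :
    evalAlternants φ (scale c S) = c • evalAlternants φ S := by
  simp only [evalAlternants, scale, List.map_map, Function.comp_def, List.smul_sum, smul_smul]

lemma evalAlternants_flatMap {α : Type*} (g : α → List (ℤ × List ℤ)) (Q : List α) :
    evalAlternants φ (Q.flatMap g) = (Q.map fun q => evalAlternants φ (g q)).sum := by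
  induction Q with
  | nil => rfl
  | cons q Q ih => rw [List.flatMap_cons, evalAlternants_append, ih, List.map_cons, List.sum_cons]

variable {φ} {f : Fin n → R} {b : ℤ → List (ℤ × ℤ)}

lemma wedgeDeriv_map (hb : ∀ a, f * φ a = ((b a).map fun p => p.1 • φ p.2).sum) (l : List ℤ) :
    wedgeDeriv f (l.map φ) = ((leibniz b l).map fun p => p.1 • wedge (p.2.map φ)).sum := by
  induction l with
  | nil => rfl
  | cons a l ih =>
    rw [List.map_cons, wedgeDeriv, hb, ih, leibniz, List.map_append, List.sum_append, map_list_sum]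
    simp only [List.map_map, Function.comp_def, wedge, List.map_cons, List.prod_cons, map_zsmul,
      ← List.sum_map_mul_left, ← List.sum_map_mul_right, smul_mul_assoc, mul_smul_comm]

lemma evalAlternants_mulSum (hb : ∀ a, f * φ a = ((b a).map fun p => p.1 • φ p.2).sum)
    (S : List (ℤ × List ℤ)) :
    evalAlternants φ (mulSum b S) = (∑ j, f j) * evalAlternants φ S := by
  have mul_alternant (l : List ℤ) :
      evalAlternants φ (leibniz b l) = (∑ j, f j) * alternant φ l := by
    rw [alternant, ← wedgeDet_wedgeDeriv, wedgeDeriv_map hb, map_list_sum]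
    simp only [evalAlternants, alternant, List.map_map, Function.comp_def, map_zsmul]
  rw [mulSum, evalAlternants_collect, evalAlternants_flatMap]
  simp only [evalAlternants_scale, mul_alternant, ← mul_smul_comm, List.sum_map_mul_left]
  rfl

/-- The linear combination of alternants obtained from `S` by applying the polynomial
`∑ c x_{k₁} x_{k₂} ⋯`, given by its terms `(c, [k₁, k₂, …])`, in the operators `op k`. -/
def applyPoly (op : ℕ → List (ℤ × List ℤ) → List (ℤ × List ℤ)) (Q : List (ℤ × List ℕ))
    (S : List (ℤ × List ℤ)) : List (ℤ × List ℤ) :=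
  collect (Q.flatMap fun q => scale q.1 (q.2.foldr op S))

/-- The value at `x` of the polynomial with terms `Q`. -/
def evalPoly (Q : List (ℤ × List ℕ)) (x : ℕ → R) : R :=
  (Q.map fun q => q.1 • (q.2.map x).prod).sum

lemma map_evalPoly {R' : Type*} [CommRing R'] (g : R →+* R') (Q : List (ℤ × List ℕ)) (x : ℕ → R) :
    g (evalPoly Q x) = evalPoly Q (g ∘ x) := by
  simp only [evalPoly, map_list_sum, map_list_prod, List.map_map, Function.comp_def, map_zsmul]

lemma evalAlternants_applyPoly {op : ℕ → List (ℤ × List ℤ) → List (ℤ × List ℤ)} {x : ℕ → R}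
    (hop : ∀ k S, evalAlternants φ (op k S) = x k * evalAlternants φ S) (Q : List (ℤ × List ℕ))
    (S : List (ℤ × List ℤ)) :
    evalAlternants φ (applyPoly op Q S) = evalPoly Q x * evalAlternants φ S := by
  have foldr_op (ks : List ℕ) :
      evalAlternants φ (ks.foldr op S) = (ks.map x).prod * evalAlternants φ S := by
    induction ks with
    | nil => simp
    | cons k ks ih => rw [List.foldr_cons, hop, ih, List.map_cons, List.prod_cons, mul_assoc]
  rw [applyPoly, evalAlternants_collect, evalAlternants_flatMap]
  simp only [evalAlternants_scale, foldr_op, ← smul_mul_assoc]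
  rw [List.sum_map_mul_right, evalPoly]

end AlternantCalculus

section PowerSums

variable {n r : ℕ}

/-- The rows of the alternants of `A_r`. -/
def rowA (a : ℤ) (j : Fin (r + 1)) : CharRing (r + 1) := coordExp j a

/-- The rows of the alternants of `B_n`, with exponents doubled. -/
def rowB (a : ℤ) (j : Fin n) : CharRing n := coordExp j (a / 2) - coordExp j (-(a / 2))

lemma alternant_rowA (v : Fin (r + 1) → ℤ) :
    alternant rowA (List.ofFn v) = altA r fun i => v i := by
  rw [alternant, List.map_ofFn, wedgeDet_wedge_ofFn, altA_eq_det]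
  rfl

lemma alternant_rowB (v : Fin n → ℤ) :
    alternant rowB (List.ofFn v) = altY .B n fun i => (v i / 2 : ℚ) := by
  rw [alternant, List.map_ofFn, wedgeDet_wedge_ofFn, altY_B_eq_det]
  rfl

lemma rowB_eq_sign_smul (a : ℤ) : (rowB a : Fin n → CharRing n) = a.sign • rowB |a| := by
  have rowB_neg (a : ℤ) : (rowB (-a) : Fin n → CharRing n) = -rowB a := by
    ext1 j
    simp [rowB, neg_div]
  obtain h | rfl | h := lt_trichotomy a 0
  · rw [Int.sign_eq_neg_one_of_neg h, abs_of_neg h, rowB_neg, neg_smul, one_smul, neg_neg]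
  · ext1 j
    simp [rowB]
  · rw [Int.sign_eq_one_of_pos h, abs_of_pos h, one_smul]

/-- The power sum `∑ e^{kν}` over the weights `ν` of the natural module of `B_n`. -/
def powerSumB (k : ℕ) : CharRing n := 1 + ∑ j, (coordExp j k + coordExp j (-k))

/-- The power sum `∑ e^{kν}` over the weights `ν` of the adjoint module of `A_r`. -/
def powerSumA (k : ℕ) : CharRing (r + 1) := -1 + (∑ j, coordExp j k) * ∑ j, coordExp j (-k)

/-- The product of a linear combination of alternants of `B_n` with `powerSumB k`. -/
def mulPowerSumB (k : ℕ) (S : List (ℤ × List ℤ)) : List (ℤ × List ℤ) :=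
  collect (S ++ mulSum (fun a => [a + 2 * k, a - 2 * k].map fun c => (c.sign, |c|)) S)

/-- The product of a linear combination of alternants of `A_r` with `powerSumA k`. -/
def mulPowerSumA (k : ℕ) (S : List (ℤ × List ℤ)) : List (ℤ × List ℤ) :=
  collect (scale (-1) S ++ mulSum (fun a => [(1, a + k)]) (mulSum (fun a => [(1, a - k)]) S))

lemma evalAlternants_mulPowerSumB (k : ℕ) (S : List (ℤ × List ℤ)) :
    evalAlternants rowB (mulPowerSumB k S) =
      (powerSumB k : CharRing n) * evalAlternants rowB S := by
  rw [mulPowerSumB, evalAlternants_collect, evalAlternants_append,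
    evalAlternants_mulSum (f := fun j => coordExp j (k : ℚ) + coordExp j (-k)), powerSumB, add_mul,
    one_mul]
  intro a
  simp only [List.map_cons, List.map_nil, List.sum_cons, List.sum_nil, ← rowB_eq_sign_smul]
  ext1 j
  simp only [rowB, Pi.mul_apply, Pi.add_apply, Pi.zero_apply, add_mul, mul_sub, coordExp_mul]
  push_cast
  ring_nf

lemma evalAlternants_mulPowerSumA (k : ℕ) (S : List (ℤ × List ℤ)) :
    evalAlternants rowA (mulPowerSumA k S) =
      (powerSumA k : CharRing (r + 1)) * evalAlternants rowA S := by
  rw [mulPowerSumA, evalAlternants_collect, evalAlternants_append, evalAlternants_scale,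
    evalAlternants_mulSum (f := fun j => coordExp j k),
    evalAlternants_mulSum (f := fun j => coordExp j (-k)), powerSumA]
  · simp [add_mul, mul_assoc]
  all_goals
    intro a
    ext1 j
    simp [rowA, coordExp_mul, add_comm, sub_eq_add_neg]

/-- The Adams operation `e^v ↦ e^{kv}`, that is `MFPaper.pw k`, as a ring homomorphism. -/
def adams (k : ℕ) : CharRing n →+* CharRing n := mapWeights (k • AddMonoidHom.id _)

lemma adams_mono (k : ℕ) (v : Fin n → ℚ) : adams k (mono v) = mono ((k : ℚ) • v) := by
  rw [adams, mapWeights_mono, Nat.cast_smul_eq_nsmul]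
  rfl

lemma adams_powerSumA (k : ℕ) : adams k (powerSumA 1 : CharRing (r + 1)) = powerSumA k := by
  simp [powerSumA, coordExp, adams_mono, ← Pi.single_smul]

lemma restrict_powerSumB (w : Fin n → Fin r → ℚ) (k : ℕ) :
    restrict w (powerSumB k) = adams k (1 + ∑ j, (mono (w j) + mono (-w j))) := by
  simp [powerSumB, restrict_coordExp, adams_mono]

end PowerSums

section NewtonRestriction

variable {n r : ℕ}

lemma slWt_zero : slWt r 0 = 0 := by
  ext
  simp [slWt, partLift]

lemma altA_rhoA_ne_zero : altA r (rhoA r) ≠ 0 := fun h => by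
  simpa [slWt_zero, h] using coeff_altA_comp_perm (strictAnti_slWt_add_rhoA (0 : Fin r → ℕ)) 1

lemma coeff_altY_B (v u : Fin n → ℚ) :
    (altY .B n v).coeff u = (Matrix.of fun i j => signedDelta (v i) (u j)).det := by
  simp only [altY_B_eq_det, Matrix.det_apply, coeff_sum, Units.smul_def, coeff_zsmul,
    Matrix.of_apply, smul_eq_mul]
  exact sum_congr rfl fun σ _ => by rw [coeff_prod_coordExp_sub fun j => v (σ j)]

lemma altY_B_ne_zero {v : Fin n → ℚ} (hv : Function.Injective v) (hpos : ∀ i, 0 < v i) :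
    altY .B n v ≠ 0 := fun h => by
  have coeff_eq_one := coeff_altY_B v v
  rw [show (Matrix.of fun i j => signedDelta (v i) (v j)) = 1 by
    ext i j
    have : -v i ≠ v j := by linarith [hpos i, hpos j]
    simp [signedDelta, Matrix.one_apply, hv.eq_iff, this], h, Matrix.det_one] at coeff_eq_one
  exact zero_ne_one coeff_eq_one

/-- The shifted highest weight `μ + ρ` of `A_r` in `gl`-coordinates; the coordinates are integral
for `μ` in the root lattice, and `shiftedWtA` is meaningful only in this case. -/
def shiftedWtA (μ : Fin r → ℕ) (i : Fin (r + 1)) : ℤ :=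
  ∑ j : Fin r with i ≤ j.castSucc, (μ j : ℤ) -
    (∑ j : Fin r, ((j : ℤ) + 1) * μ j) / (r + 1) + (r - i)

/-- The weight of `A_r` with coordinates `μ` in the basis of fundamental weights lies in the root
lattice. -/
abbrev InRootLattice (μ : Fin r → ℕ) : Prop := (r + 1 : ℤ) ∣ ∑ j : Fin r, ((j : ℤ) + 1) * μ j

lemma alternant_shiftedWtA {μ : Fin r → ℕ} (hμ : InRootLattice μ) :
    alternant rowA (List.ofFn (shiftedWtA μ)) = altA r (slWt r μ + rhoA r) := by
  rw [alternant_rowA]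
  congr 1
  ext i
  simp only [shiftedWtA, Pi.add_apply, slWt, partLift, rhoA, Int.cast_add, Int.cast_sub,
    Fin.le_def, Fin.val_castSucc]
  rw [Int.cast_div hμ (by exact_mod_cast r.succ_ne_zero)]
  push_cast
  rfl

lemma alternant_shiftedWtA_zero :
    alternant rowA (List.ofFn (shiftedWtA (0 : Fin r → ℕ))) = altA r (rhoA r) := by
  rw [alternant_shiftedWtA (by simp [InRootLattice]), slWt_zero, zero_add]

variable {δ : Fin r → ℕ} {a : Fin (n + 1) → ℕ} {w : Fin (n + 1) → Fin (r + 1) → ℚ}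
  {f : CharRing (n + 1)} {Q : List (ℤ × List ℕ)} {N : ℤ}

lemma powerSumA_one_mul_altA (hδ_root : InRootLattice δ)
    (hδ : mulPowerSumA 1 [(1, List.ofFn (shiftedWtA (0 : Fin r → ℕ)))] =
      [(1, List.ofFn (shiftedWtA δ))]) :
    powerSumA 1 * altA r (rhoA r) = altA r (slWt r δ + rhoA r) := by
  have eval := evalAlternants_mulPowerSumA (r := r) 1
    [(1, List.ofFn (shiftedWtA (0 : Fin r → ℕ)))]
  simp only [hδ, evalAlternants, List.map_cons, List.map_nil, List.sum_cons, List.sum_nil,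
    add_zero, one_smul, alternant_shiftedWtA hδ_root, alternant_shiftedWtA_zero] at eval
  exact eval.symm

lemma restrict_powerSumB_of_wtSys (hw : WtSys .B (n + 1) r δ w)
    (hδ : powerSumA 1 * altA r (rhoA r) = altA r (slWt r δ + rhoA r)) (k : ℕ) :
    restrict w (powerSumB k) = powerSumA k := by
  have natural : 1 + ∑ j, (mono (w j) + mono (-w j)) = powerSumA 1 := by
    refine mul_right_cancel₀ altA_rhoA_ne_zero ((Eq.trans ?_ hw).trans hδ.symm)
    rw [if_pos rfl, mono_zero, add_comm (1 : CharRing (r + 1))]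
  rw [restrict_powerSumB, natural, adams_powerSumA]

lemma altY_B_rhoY_ne_zero : altY .B (n + 1) (rhoY .B (n + 1)) ≠ 0 := by
  rw [rhoY_B]
  refine altY_B_ne_zero (fun i j h => (strictAnti_shiftedWt 0).injective ?_) fun i => ?_
  · simpa [div_left_inj'] using h
  · exact div_pos (by rw [shiftedWt_zero]; exact_mod_cast Nat.succ_pos _) two_pos

lemma evalPoly_powerSumB_eq (hf : IsCharY .B (n + 1) a f)
    (hQ : applyPoly mulPowerSumB Q [(1, List.ofFn fun i : Fin (n + 1) => (shiftedWt 0 i : ℤ))] =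
      [(N, List.ofFn fun i => (shiftedWt a i : ℤ))]) :
    evalPoly Q powerSumB = N • f := by
  have eval := evalAlternants_applyPoly (evalAlternants_mulPowerSumB (n := n + 1)) Q
    [(1, List.ofFn fun i : Fin (n + 1) => (shiftedWt 0 i : ℤ))]
  simp only [hQ, evalAlternants, List.map_cons, List.map_nil, List.sum_cons, List.sum_nil, add_zero,
    alternant_rowB, Int.cast_natCast, one_smul, ← rhoY_B, ← epsWt_add_rhoY] at eval
  refine mul_right_cancel₀ altY_B_rhoY_ne_zero (eval.symm.trans ?_)
  rw [← hf, smul_mul_assoc, mul_comm]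

lemma smul_restrict_mul_altA (hw : ∀ k, restrict w (powerSumB k) = powerSumA k)
    (hf : IsCharY .B (n + 1) a f)
    (hQ : applyPoly mulPowerSumB Q [(1, List.ofFn fun i : Fin (n + 1) => (shiftedWt 0 i : ℤ))] =
      [(N, List.ofFn fun i => (shiftedWt a i : ℤ))])
    {T : List (ℤ × (Fin r → ℕ))} (hT_root : ∀ t ∈ T, InRootLattice t.2)
    (hT : applyPoly mulPowerSumA Q [(1, List.ofFn (shiftedWtA (0 : Fin r → ℕ)))] =
      T.map fun t => (t.1, List.ofFn (shiftedWtA t.2))) :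
    N • (restrict w f * altA r (rhoA r)) =
      (T.map fun t => t.1 • altA r (slWt r t.2 + rhoA r)).sum := by
  have eval := evalAlternants_applyPoly (evalAlternants_mulPowerSumA (r := r)) Q
    [(1, List.ofFn (shiftedWtA (0 : Fin r → ℕ)))]
  simp only [hT, evalAlternants, List.map_map, List.map_cons, List.map_nil, List.sum_cons,
    List.sum_nil, add_zero, one_smul, alternant_shiftedWtA_zero] at eval
  have eval_Q : evalPoly Q powerSumA = N • restrict w f := by
    rw [← map_zsmul, ← evalPoly_powerSumB_eq hf hQ, map_evalPoly]
    exact congrArg _ (funext hw).symm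
  rw [← smul_mul_assoc, ← eval_Q, ← eval]
  exact congrArg _ (List.map_congr_left fun t ht => by
    rw [Function.comp_apply, alternant_shiftedWtA (hT_root t ht)])

lemma coeff_sum_smul_altA (T : List (ℤ × (Fin r → ℕ))) (μ : Fin r → ℕ) :
    (T.map fun t => t.1 • altA r (slWt r t.2 + rhoA r)).sum.coeff (slWt r μ + rhoA r) =
      (T.map fun t => if t.2 = μ then t.1 else 0).sum := by
  induction T with
  | nil => rfl
  | cons t T ih =>
    have coeff_one := coeff_altA_slWt_comp_perm t.2 μ 1
    rw [Equiv.Perm.coe_one, Function.comp_id, Equiv.Perm.sign_one, Units.val_one] at coeff_one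
    simp [ih, coeff_one, -zsmul_eq_mul]

lemma exists_decomp_le_one (hN : N ≠ 0) {F : CharRing (r + 1)} {mus : List (Fin r → ℕ)}
    (hmus : mus.Nodup) (hF : N • (F * altA r (rhoA r)) =
      ((mus.map fun μ => (N, μ)).map fun t => t.1 • altA r (slWt r t.2 + rhoA r)).sum) :
    ∃ c, Decomp r F c ∧ ∀ μ, c μ ≤ 1 := by
  refine ⟨Finsupp.indicator mus.toFinset fun _ _ => 1, smul_right_injective _ hN ?_, fun μ => ?_⟩
  · rw [Finsupp.sum_indicator_index _ (by simp), List.sum_toFinset _ hmus]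
    simpa [Function.comp_def, List.smul_sum] using hF
  · rw [Finsupp.indicator_apply]
    split_ifs <;> simp

lemma isMFRes_of_applyPoly_eq (hδ : powerSumA 1 * altA r (rhoA r) = altA r (slWt r δ + rhoA r))
    (hN : N ≠ 0)
    (hQ : applyPoly mulPowerSumB Q [(1, List.ofFn fun i : Fin (n + 1) => (shiftedWt 0 i : ℤ))] =
      [(N, List.ofFn fun i => (shiftedWt a i : ℤ))])
    {mus : List (Fin r → ℕ)} (hmus : mus.Nodup) (hmus_root : ∀ μ ∈ mus, InRootLattice μ)
    (hT : applyPoly mulPowerSumA Q [(1, List.ofFn (shiftedWtA (0 : Fin r → ℕ)))] =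
      mus.map fun μ => (N, List.ofFn (shiftedWtA μ))) :
    IsMFRes .B (n + 1) r δ a := fun _ hw _ hf =>
  exists_decomp_le_one hN hmus (smul_restrict_mul_altA (restrict_powerSumB_of_wtSys hw hδ) hf hQ
    (by simpa using hmus_root) (by rw [hT, List.map_map]; rfl))

end NewtonRestriction

section AdjointEmbedding

lemma altA_rhoA_eq_prod (r : ℕ) :
    altA r (rhoA r) = ∏ i, ∏ j ∈ Ioi i, (coordExp i 1 - coordExp j 1) := by
  rw [altA_eq_det, ← Matrix.det_transpose]
  convert (Matrix.det_projVandermonde 1 fun i : Fin (r + 1) => coordExp i 1) using 2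
  · ext1 i j
    simp [Matrix.projVandermonde_apply, coordExp_pow, rhoA, Fin.val_rev, Nat.add_sub_add_right,
      Nat.cast_sub (Fin.is_le j)]
  · simp

/-- The root `ε_i - ε_j` of `A_r`. -/
def rootA {r : ℕ} (i j : Fin (r + 1)) : Fin (r + 1) → ℚ := Pi.single i 1 - Pi.single j 1

lemma mono_smul_rootA {r : ℕ} (c : ℚ) (i j : Fin (r + 1)) :
    mono (c • rootA i j) = coordExp i c * coordExp j (-c) := by
  rw [coordExp, coordExp, mono_mul_mono, rootA, smul_sub, ← Pi.single_smul, ← Pi.single_smul,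
    smul_eq_mul, mul_one, Pi.single_neg, sub_eq_add_neg]

lemma coordExp_one_sub_coordExp_one {r : ℕ} (i j : Fin (r + 1)) :
    coordExp i 1 - coordExp j 1 = coordExp i (1 / 2) * coordExp j (1 / 2) *
      (mono ((1 / 2 : ℚ) • rootA i j) - mono (-((1 / 2 : ℚ) • rootA i j))) := by
  have hi := coordExp_mul_coordExp_neg i (1 / 2)
  have hj := coordExp_mul_coordExp_neg j (1 / 2)
  have sq (l : Fin (r + 1)) : coordExp l 1 = coordExp l (1 / 2) ^ 2 := by
    rw [coordExp_pow]
    norm_num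
  rw [← neg_smul, mono_smul_rootA, mono_smul_rootA, neg_neg, sq, sq]
  linear_combination -coordExp i (1 / 2) ^ 2 * hj + coordExp j (1 / 2) ^ 2 * hi

/-- The positive roots of `A_3`, to which the weights `ε_1, …, ε_6` of `B_7` restrict, and the
restriction `0` of `ε_7`. The coordinates refer to the basis `ε_4 - ε_5`, `ε_3 - ε_4`, `ε_5 - ε_6`
of the root lattice, in which all positive roots of `B_7` have natural coordinates. -/
def posRoot : Fin 7 → ℤ × ℤ × ℤ :=
  ![(4, 3, 2), (3, 2, 1), (2, 2, 1), (2, 1, 1), (1, 1, 1), (1, 1, 0), 0]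

/-- The height of an element of the root lattice of `A_3` in the coordinates of `posRoot`. -/
def height : ℤ × ℤ × ℤ →+ ℤ where
  toFun x := x.1 + x.2.1 + x.2.2
  map_zero' := by simp
  map_add' x y := by simp only [Prod.fst_add, Prod.snd_add]; ring

lemma strictMono_height : StrictMono height := fun x y hxy => by
  obtain ⟨⟨h₁, h₂, h₃⟩, hne⟩ := lt_iff_le_and_ne.1 hxy
  contrapose! hne
  change y.1 + y.2.1 + y.2.2 ≤ x.1 + x.2.1 + x.2.2 at hne
  ext <;> linarith

/-- The element of the root lattice of `A_3` with given coordinates. -/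
def rootWt : ℤ × ℤ × ℤ →+ (Fin 4 → ℚ) where
  toFun x := ![-x.1 + x.2.1 + x.2.2, x.1 - 2 * x.2.2, x.1 - 2 * x.2.1 + x.2.2, -x.1 + x.2.1]
  map_zero' := by ext i; fin_cases i <;> simp
  map_add' x y := by ext i; fin_cases i <;> simp <;> ring

lemma rootWt_injective : Function.Injective rootWt := fun x y h => by
  have h₀ : (-x.1 + x.2.1 + x.2.2 : ℚ) = -y.1 + y.2.1 + y.2.2 := congrFun h 0
  have h₁ : (x.1 - 2 * x.2.2 : ℚ) = y.1 - 2 * y.2.2 := congrFun h 1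
  have h₃ : (-x.1 + x.2.1 : ℚ) = -y.1 + y.2.1 := congrFun h 3
  norm_cast at h₀ h₁ h₃
  ext <;> linarith

lemma adjoint_mul_altA :
    powerSumA 1 * altA 3 (rhoA 3) = altA 3 (slWt 3 (e 3 1 + e 3 3) + rhoA 3) :=
  powerSumA_one_mul_altA (by decide +kernel) (by decide +kernel)

lemma rootWt_comp_posRoot : rootWt ∘ posRoot =
    ![rootA 0 3, rootA 1 3, rootA 0 2, rootA 2 3, rootA 0 1, rootA 1 2, 0] := by
  ext i j
  fin_cases i <;> fin_cases j <;> simp [rootWt, posRoot, rootA] <;> norm_num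

lemma wtSys_posRoot : WtSys .B 7 3 (e 3 1 + e 3 3) (rootWt ∘ posRoot) := by
  have mono_rootA (i j : Fin 4) : mono (rootA i j) + mono (-rootA i j) =
      coordExp i 1 * coordExp j (-1) + coordExp i (-1) * coordExp j 1 := by
    have hpos := mono_smul_rootA 1 i j
    have hneg := mono_smul_rootA (-1) i j
    rw [one_smul] at hpos
    rw [neg_one_smul, neg_neg] at hneg
    rw [hpos, hneg]
  have adjoint : (powerSumA 1 : CharRing 4) =
      -1 + (∑ j : Fin 4, coordExp j 1) * ∑ j : Fin 4, coordExp j (-1) := by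
    rw [powerSumA, Nat.cast_one]
  have cancel (j : Fin 4) := coordExp_mul_coordExp_neg j 1
  rw [WtSys, ← adjoint_mul_altA, rootWt_comp_posRoot, adjoint]
  congr 1
  simp only [Fin.sum_univ_seven, Matrix.cons_val, mono_rootA, neg_zero, mono_zero, if_true,
    Fin.sum_univ_four]
  linear_combination -cancel 0 - cancel 1 - cancel 2 - cancel 3

lemma altA_rhoA_eq_mono_mul_weylDenom :
    altA 3 (rhoA 3) = mono (fun _ => 3 / 2) * weylDenom (rootWt ∘ posRoot) := by
  have cube (j : Fin 4) : coordExp j (3 / 2) = coordExp j (1 / 2) ^ 3 := by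
    rw [coordExp_pow]
    norm_num
  have vandermonde : altA 3 (rhoA 3) = ∏ i : Fin 4, ∏ j ∈ Ioi i, (coordExp i 1 - coordExp j 1) :=
    altA_rhoA_eq_prod 3
  rw [vandermonde, weylDenom, rootWt_comp_posRoot, ← prod_coordExp]
  simp only [coordExp_one_sub_coordExp_one, cube, Fin.prod_univ_four, Fin.prod_univ_six,
    show Ioi (0 : Fin 4) = {1, 2, 3} by decide, show Ioi (1 : Fin 4) = {2, 3} by decide,
    show Ioi (2 : Fin 4) = {3} by decide, show Ioi (3 : Fin 4) = ∅ by decide]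
  simp only [mem_insert, Fin.reduceEq, mem_singleton, or_self, not_false_eq_true, prod_insert,
    prod_singleton, prod_empty, mul_one, Nat.succ_eq_add_one, Nat.reduceAdd, Fin.castSucc_zero,
    Fin.castSucc_one, Fin.reduceCastSucc, Matrix.cons_val_zero, Matrix.cons_val_one,
    Matrix.cons_val, Fin.isValue]
  ring

variable {a : Fin 7 → ℕ}

lemma coeff_restrict_mul_altA {f : CharRing 7}
    (hf : reducedAlternant (shiftedWt 0) * f = reducedAlternant (shiftedWt a)) (x : ℤ × ℤ × ℤ) :
    (restrict (rootWt ∘ posRoot) f * altA 3 (rhoA 3)).coeff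
      (topWt (rootWt ∘ posRoot) (shiftedWt a) - rootWt x + fun _ => 3 / 2) =
        restrictMult height posRoot a x := by
  rw [altA_rhoA_eq_mono_mul_weylDenom, mul_comm (mono _), ← mul_assoc, coeff_mul_mono,
    add_sub_cancel_right]
  exact coeff_restrict_mul_weylDenom_eq_restrictMult rootWt_injective rfl strictMono_height
    (by simp_rw [lt_iff_le_and_ne]; decide) (by simp_rw [lt_iff_le_and_ne]; decide) hf x

lemma restrictMult_le_one (ha : IsMFRes .B 7 3 (e 3 1 + e 3 3) a) (x : ℤ × ℤ × ℤ) :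
    restrictMult height posRoot a x ≤ 1 := by
  obtain ⟨f, hf, hchar⟩ := exists_reducedAlternant_mul_eq a
  obtain ⟨c, hc, hc_le⟩ := ha _ wtSys_posRoot f hchar
  rw [← coeff_restrict_mul_altA hf]
  exact coeff_mul_altA_le_one hc hc_le _

end AdjointEmbedding

section Exclusion

/-- A bound for the lowering vectors that contribute to the multiplicity at depth `x`. -/
def loweringBound (x : ℤ × ℤ × ℤ) : Fin 6 → ℤ := ![x.2.2, x.1, x.2.1, x.1, x.2.2, x.2.1]

lemma le_loweringBound {x : ℤ × ℤ × ℤ} {β : Fin 6 → ℕ} (hβ : lowering posRoot β ≤ x) (k : Fin 6) :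
    β k ≤ loweringBound x k := by
  obtain ⟨h₁, h₂, h₃⟩ := hβ
  simp only [lowering, posRoot, Matrix.cons_val_succ, nsmul_eq_mul, Fin.sum_univ_six,
    Fin.castSucc_zero, Matrix.cons_val_zero, Prod.mk_sub_mk, Int.reduceSub, Fin.castSucc_one,
    Matrix.cons_val_one, sub_self, Fin.reduceCastSucc, Matrix.cons_val, sub_zero, Prod.fst_add,
    Prod.fst_mul, Prod.fst_natCast, mul_one, mul_zero, add_zero, Prod.snd_add, Prod.snd_mul,
    Prod.snd_natCast] at h₁ h₂ h₃
  fin_cases k <;> simp [loweringBound] <;> omega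

lemma restrictMult_inf {a N : Fin 7 → ℕ} {x : ℤ × ℤ × ℤ} (hlast : a 6 ≤ N 6)
    (hN : ∀ k : Fin 6, a k.castSucc ≤ N k.castSucc ∨ loweringBound x k ≤ N k.castSucc) :
    restrictMult height posRoot (a ⊓ N) x = restrictMult height posRoot a x := by
  refine restrictMult_congr (inf_eq_left.2 hlast) fun β hβ k => ?_
  have := le_loweringBound (sub_nonneg.1 (nonneg_of_partitionCount_ne_zero hβ)) k
  have := hN k
  rw [Pi.inf_apply]
  omega

-- At this depth the Kostant sum is out of reach of evaluation, so the multiplicity is read off the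
-- decomposition of the character `h_4 - h_2` instead.
lemma restrictMult_four_nsmul_one :
    restrictMult height posRoot (4 • e 7 1) (8, 6, 4) = 2 := by
  obtain ⟨f, hf, hchar⟩ := exists_reducedAlternant_mul_eq (4 • e 7 1)
  have decomp := smul_restrict_mul_altA (N := 24)
    (restrict_powerSumB_of_wtSys wtSys_posRoot adjoint_mul_altA) hchar
    (Q := [(1, [1, 1, 1, 1]), (6, [2, 1, 1]), (8, [3, 1]), (3, [2, 2]), (6, [4]), (-12, [1, 1]),
      (-12, [2])]) (by decide +kernel)
    (T := [(24, 0), (24, ![0, 2, 0]), (24, ![2, 1, 0]), (24, ![0, 1, 2]), (48, ![2, 0, 2]),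
      (24, ![1, 0, 1]), (24, ![1, 2, 1]), (24, ![2, 2, 2]), (24, ![4, 0, 4]), (24, ![0, 4, 0]),
      (24, ![3, 0, 3]), (24, ![3, 1, 1]), (24, ![1, 1, 3])]) (by decide +kernel) (by decide +kernel)
  have weight : topWt (rootWt ∘ posRoot) (shiftedWt (4 • e 7 1)) - rootWt (8, 6, 4) +
      (fun _ => 3 / 2) = slWt 3 ![2, 0, 2] + rhoA 3 := by
    decide +kernel
  have coeff := congrArg (fun F => F.coeff (slWt 3 ![2, 0, 2] + rhoA 3)) decomp
  have multiplicity := coeff_restrict_mul_altA hf (8, 6, 4)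
  rw [weight] at multiplicity
  simp only [coeff_sum_smul_altA, coeff_zsmul, multiplicity] at coeff
  refine mul_left_cancel₀ (by norm_num : (24 : ℤ) ≠ 0) (coeff.trans ?_)
  decide +kernel

variable {a : Fin 7 → ℕ}

lemma not_inf_of_isMFRes (ha : IsMFRes .B 7 3 (e 3 1 + e 3 3) a) (N : Fin 7 → ℕ)
    (x : ℤ × ℤ × ℤ) (hlast : a 6 ≤ N 6)
    (hN : ∀ k : Fin 6, a k.castSucc ≤ N k.castSucc ∨ loweringBound x k ≤ N k.castSucc)
    {P : (Fin 7 → ℕ) → Prop} (hP : ∀ b ∈ Iic N, P b → 2 ≤ restrictMult height posRoot b x) :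
    ¬P (a ⊓ N) := fun h => by
  have two_le := hP _ (mem_Iic.2 inf_le_right) h
  rw [restrictMult_inf hlast hN] at two_le
  exact (restrictMult_le_one ha x).not_gt two_le

lemma eq_zero_six_of_isMFRes (ha : IsMFRes .B 7 3 (e 3 1 + e 3 3) a) : a 6 = 0 := by
  have le_one := restrictMult_le_one ha 0
  rw [restrictMult_zero] at le_one
  exact Nat.le_zero.1 (by exact_mod_cast (by linarith : (a (Fin.last 6) : ℤ) ≤ 0))

set_option maxRecDepth 100000 in
lemma eq_zero_five_of_isMFRes (ha : IsMFRes .B 7 3 (e 3 1 + e 3 3) a) : a 5 = 0 := by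
  have h₆ := eq_zero_six_of_isMFRes ha
  have := not_inf_of_isMFRes ha ![0, 1, 1, 1, 0, 1, 0] (1, 1, 0) (by simp [h₆])
    (by intro k; fin_cases k <;> simp [loweringBound]) (P := fun b => b 5 ≠ 0) (by decide +kernel)
  simpa using this

set_option maxRecDepth 100000 in
lemma eq_zero_four_of_isMFRes (ha : IsMFRes .B 7 3 (e 3 1 + e 3 3) a) : a 4 = 0 := by
  have h₆ := eq_zero_six_of_isMFRes ha
  have h₅ := eq_zero_five_of_isMFRes ha
  have := not_inf_of_isMFRes ha ![1, 1, 1, 1, 1, 0, 0] (1, 1, 1) (by simp [h₆])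
    (by intro k; fin_cases k <;> simp [loweringBound, h₅]) (P := fun b => b 4 ≠ 0)
    (by decide +kernel)
  simpa using this

set_option maxRecDepth 100000 in
lemma eq_zero_three_of_isMFRes (ha : IsMFRes .B 7 3 (e 3 1 + e 3 3) a) : a 3 = 0 := by
  have h₆ := eq_zero_six_of_isMFRes ha
  have h₅ := eq_zero_five_of_isMFRes ha
  have h₄ := eq_zero_four_of_isMFRes ha
  have := not_inf_of_isMFRes ha ![1, 2, 1, 2, 0, 0, 0] (2, 1, 1) (by simp [h₆])
    (by intro k; fin_cases k <;> simp [loweringBound, h₅, h₄]) (P := fun b => b 3 ≠ 0)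
    (by decide +kernel)
  simpa using this

set_option maxRecDepth 100000 in
lemma sum_le_one_of_isMFRes_of_ne_zero_two (ha : IsMFRes .B 7 3 (e 3 1 + e 3 3) a) (h₂ : a 2 ≠ 0) :
    a 0 + a 1 + a 2 ≤ 1 := by
  have h₆ := eq_zero_six_of_isMFRes ha
  have h₅ := eq_zero_five_of_isMFRes ha
  have h₄ := eq_zero_four_of_isMFRes ha
  have h₃ := eq_zero_three_of_isMFRes ha
  have := not_inf_of_isMFRes ha ![1, 2, 2, 0, 0, 0, 0] (2, 2, 1) (by simp [h₆])
    (by intro k; fin_cases k <;> simp [loweringBound, h₅, h₄, h₃])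
    (P := fun b => b 2 ≠ 0 ∧ 2 ≤ b 0 + b 1 + b 2) (by decide +kernel)
  simp only [Pi.inf_apply, Matrix.cons_val] at this
  omega

set_option maxRecDepth 100000 in
lemma sum_le_one_of_isMFRes_of_ne_zero_one (ha : IsMFRes .B 7 3 (e 3 1 + e 3 3) a) (h₁ : a 1 ≠ 0)
    (h₂ : a 2 = 0) : a 0 + a 1 ≤ 1 := by
  have h₆ := eq_zero_six_of_isMFRes ha
  have h₅ := eq_zero_five_of_isMFRes ha
  have h₄ := eq_zero_four_of_isMFRes ha
  have h₃ := eq_zero_three_of_isMFRes ha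
  have := not_inf_of_isMFRes ha ![1, 3, 0, 0, 0, 0, 0] (3, 2, 1) (by simp [h₆])
    (by intro k; fin_cases k <;> simp [loweringBound, h₅, h₄, h₃, h₂])
    (P := fun b => b 1 ≠ 0 ∧ 2 ≤ b 0 + b 1) (by decide +kernel)
  simp only [Pi.inf_apply, Matrix.cons_val] at this
  omega

lemma apply_zero_lt_four_of_isMFRes (ha : IsMFRes .B 7 3 (e 3 1 + e 3 3) a)
    (h : ∀ j, j ≠ 0 → a j = 0) : a 0 < 4 := by
  by_contra! four_le
  have inf_eq : a ⊓ 4 • e 7 1 = 4 • e 7 1 := by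
    refine inf_eq_right.2 fun j => ?_
    obtain rfl | hj := eq_or_ne j 0
    · exact four_le
    · simp [e, hj]
  have stable := restrictMult_inf (a := a) (N := 4 • e 7 1) (x := (8, 6, 4))
    (by simp [h]) fun k => by fin_cases k <;> simp [loweringBound, e, h]
  rw [inf_eq, restrictMult_four_nsmul_one] at stable
  linarith [restrictMult_le_one ha (8, 6, 4)]

end Exclusion

section Decompositions

lemma isMFRes_two : IsMFRes .B 7 3 (e 3 1 + e 3 3) (e 7 2) :=
  isMFRes_of_applyPoly_eq adjoint_mul_altA two_ne_zero (Q := [(1, [1, 1]), (-1, [2])])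
    (mus := [![2, 1, 0], ![0, 1, 2], ![1, 0, 1]]) (by decide +kernel) (by decide +kernel)
    (by decide +kernel) (by decide +kernel)

lemma isMFRes_two_nsmul_one : IsMFRes .B 7 3 (e 3 1 + e 3 3) (2 • e 7 1) :=
  isMFRes_of_applyPoly_eq adjoint_mul_altA two_ne_zero (Q := [(1, [1, 1]), (1, [2]), (-2, [])])
    (mus := [![0, 2, 0], ![2, 0, 2], ![1, 0, 1]]) (by decide +kernel) (by decide +kernel)
    (by decide +kernel) (by decide +kernel)

lemma isMFRes_three : IsMFRes .B 7 3 (e 3 1 + e 3 3) (e 7 3) :=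
  isMFRes_of_applyPoly_eq adjoint_mul_altA (by norm_num : (6 : ℤ) ≠ 0)
    (Q := [(1, [1, 1, 1]), (-3, [1, 2]), (2, [3])])
    (mus := [0, ![0, 2, 0], ![4, 0, 0], ![1, 2, 1], ![0, 0, 4], ![1, 0, 1], ![2, 0, 2], ![0, 1, 2],
      ![2, 1, 0]]) (by decide +kernel) (by decide +kernel) (by decide +kernel) (by decide +kernel)

lemma isMFRes_three_nsmul_one : IsMFRes .B 7 3 (e 3 1 + e 3 3) (3 • e 7 1) :=
  isMFRes_of_applyPoly_eq adjoint_mul_altA (by norm_num : (6 : ℤ) ≠ 0)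
    (Q := [(1, [1, 1, 1]), (3, [1, 2]), (2, [3]), (-6, [1])])
    (mus := [![1, 0, 1], 0, ![1, 2, 1], ![3, 0, 3], ![2, 0, 2], ![0, 1, 2], ![2, 1, 0]])
    (by decide +kernel) (by decide +kernel) (by decide +kernel) (by decide +kernel)

end Decompositions

section Classification

lemma eq_of_isMFRes {a : Fin 7 → ℕ} (ha : IsMFRes .B 7 3 (e 3 1 + e 3 3) a) :
    (∃ k < 4, a = k • e 7 1) ∨ a = e 7 2 ∨ a = e 7 3 := by
  have h₆ := eq_zero_six_of_isMFRes ha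
  have h₅ := eq_zero_five_of_isMFRes ha
  have h₄ := eq_zero_four_of_isMFRes ha
  have h₃ := eq_zero_three_of_isMFRes ha
  by_cases h₂ : a 2 = 0
  · by_cases h₁ : a 1 = 0
    · refine .inl ⟨a 0, apply_zero_lt_four_of_isMFRes ha ?_, ?_⟩
      · simp [Fin.forall_fin_succ, h₁, h₂, h₃, h₄, h₅, h₆]
      · ext j
        fin_cases j <;> simp [e, h₁, h₂, h₃, h₄, h₅, h₆]
    · have := sum_le_one_of_isMFRes_of_ne_zero_one ha h₁ h₂
      refine .inr (.inl ?_)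
      ext j
      fin_cases j <;> simp [e, h₂, h₃, h₄, h₅, h₆] <;> omega
  · have := sum_le_one_of_isMFRes_of_ne_zero_two ha h₂
    refine .inr (.inr ?_)
    ext j
    fin_cases j <;> simp [e, h₃, h₄, h₅, h₆] <;> omega

end Classification

end AdjointB7

/-- **Proposition 5.3.**  Let `X = A₃ < Y = B₇ = SO₁₅` via the 15-dimensional adjoint
representation `δ = ω₁ + ω₃`.  Let `lam ≠ 0, λ₁` be a dominant weight for `Y`.
Then `V_Y(lam)↓X` is multiplicity-free if and only if
`lam = λ₂, 2λ₁, 3λ₁` or `λ₃`. -/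
theorem thm_A3_in_B7 (lam : Fin 7 → ℕ)
    (hlam0 : lam ≠ 0) (hlam1 : lam ≠ e 7 1) :
    IsMFRes CType.B 7 3 (e 3 1 + e 3 3) lam ↔
      (lam = e 7 2 ∨ lam = 2 • e 7 1 ∨ lam = 3 • e 7 1 ∨ lam = e 7 3) := by
  constructor
  · intro h
    obtain ⟨k, hk, rfl⟩ | rfl | rfl := AdjointB7.eq_of_isMFRes h
    · interval_cases k
      · exact absurd (zero_smul ℕ _) hlam0
      · exact absurd (one_smul ℕ _) hlam1
      · exact .inr (.inl rfl)
      · exact .inr (.inr (.inl rfl))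
    · exact .inl rfl
    · exact .inr (.inr (.inr rfl))
  · rintro (rfl | rfl | rfl | rfl)
    exacts [AdjointB7.isMFRes_two, AdjointB7.isMFRes_two_nsmul_one,
      AdjointB7.isMFRes_three_nsmul_one, AdjointB7.isMFRes_three]
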